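/- arXiv:1406.5908 — 2 statements merged into one kernel-verified Lean document; each statement's English description precedes it below -/
import Mathlib

section
/- Let d ∈ ℕ and let (G_i)_{i∈ℕ} be a sequence of finite groups, each with a distinguished generating set of cardinality d. Then there exist, for every subset S ⊆ ℕ, a finitely generated group W_S of subexponential growth together with, for every s ∈ S, an injective homomorphism Ψ_s: G_s → W_S, and constants K_s, L_s ≥ 1 which depend only on s and on the groups G_j with j ∈ S, j < s (in particular not on G_s, nor on G_j for j > s), such that d_{G_s}(x,y)/K_s ≤ d_{W_S}(Ψ_s(x), Ψ_s(y)) ≤ L_s · d_{G_s}(x,y) for all x,y ∈ G_s, where d_{G_s} is the word metric on G_s and d_{W_S} is the word metric on W_S with respect to a fixed finite generating set. -/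
/-- The set of elements of `G` expressible as a product of at most `n`
elements of `S ∪ S⁻¹`. -/
def wordBall {G : Type*} [Group G] (S : Set G) (n : ℕ) : Set G :=
  {g | ∃ l : List G, (∀ x ∈ l, x ∈ S ∨ x⁻¹ ∈ S) ∧ l.length ≤ n ∧ l.prod = g}

/-- The word norm of `g` with respect to `S`. -/
noncomputable def wordNorm {G : Type*} [Group G] (S : Set G) (g : G) : ℕ :=
  sInf {n | ∃ l : List G, (∀ x ∈ l, x ∈ S ∨ x⁻¹ ∈ S) ∧ l.length = n ∧ l.prod = g}

/-- The word metric `d_S(x, y) = ‖x y⁻¹‖_S`. -/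
noncomputable def wordDist {G : Type*} [Group G] (S : Set G) (x y : G) : ℕ :=
  wordNorm S (x * y⁻¹)

/-- `(G, S)` has subexponential growth. -/
def SubexpGrowth {G : Type*} [Group G] (S : Set G) : Prop :=
  ∀ lam : ℝ, 1 < lam → ∀ᶠ n : ℕ in Filter.atTop,
    (Nat.card (wordBall S n) : ℝ) < lam ^ n

/-- A finite group marked with a distinguished generating set of cardinality
`d`. -/
structure MarkedGroup (d : ℕ) : Type 1 where
  carrier : Type
  [grp : Group carrier]
  [fin : Fintype carrier]
  gens : Finset carrier
  card_gens : gens.card = d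
  isGen : Subgroup.closure (gens : Set carrier) = ⊤

attribute [instance] MarkedGroup.grp MarkedGroup.fin

/-!
Grigorchuk's group acts on the binary tree `List Bool`. Its directed generators are decorated: a
letter also multiplies the fiber over each vertex next to the ray `true, true, …` by an element of
a group depending on the vertex, the vertices of level `s + 1` sharing one finite group `F s`. The
decorated group keeps the contraction of Grigorchuk's group: an element of weight `n` is determined,
up to boundedly many choices, by two sections of total weight at most `9 / 10 * n + O(1)`, whence
subexponential growth.

At level `s + 1` the decorations are two homomorphisms `φ s, ψ s : P →* F s` from one finite abelian
group `P`, so that a commutator of two quotients `ψ s p * (φ s p)⁻¹` dies at all other vertices and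
is realized by a word whose length depends on `s` only. It remains to embed each `d`-generated
finite group `G` in a finite group `F` with two images of `P = (ZMod 3) ^ (d + 1)`, with the
generators of `G` as such commutators, and without shortening the elements of `G`. Here `F` permutes
tuples of elements of `G`: left multiplication by `g` on one coordinate is the commutator of a shift
of coordinates and of left multiplication by `g` on all later coordinates. In a word of length `n`
the shift moves coordinates by at most `2 * n` places, so for tuples longer than the diameter of `G`
the coordinates can be followed and the word reads off an expression of length `2 * n`.
-/

open Equiv (Perm)
open Set (range)
open scoped commutatorElement
open Finset.HasAntidiagonal (antidiagonal mem_antidiagonal)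

universe u v w

section WordNorm

variable {G : Type u} {H : Type v} [Group G] [Group H] {S : Set G} {T : Set H}

theorem one_mem_wordBall (S : Set G) (n : ℕ) : 1 ∈ wordBall S n :=
  ⟨[], by simp, n.zero_le, rfl⟩

theorem wordBall_mono {m n : ℕ} (h : m ≤ n) : wordBall S m ⊆ wordBall S n :=
  fun _ ⟨l, hl, hm, hx⟩ => ⟨l, hl, hm.trans h, hx⟩

theorem subset_wordBall_one (S : Set G) : S ⊆ wordBall S 1 :=
  fun x hx => ⟨[x], by simp [hx], le_rfl, List.prod_singleton⟩

theorem mul_mem_wordBall {x y : G} {m n : ℕ} (hx : x ∈ wordBall S m) (hy : y ∈ wordBall S n) :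
    x * y ∈ wordBall S (m + n) := by
  obtain ⟨l, hl, hlm, rfl⟩ := hx
  obtain ⟨k, hk, hkn, rfl⟩ := hy
  refine ⟨l ++ k, fun z hz => ?_, by grind, List.prod_append⟩
  exact (List.mem_append.1 hz).elim (hl z) (hk z)

theorem inv_mem_wordBall {x : G} {n : ℕ} (hx : x ∈ wordBall S n) : x⁻¹ ∈ wordBall S n := by
  obtain ⟨l, hl, hn, rfl⟩ := hx
  refine ⟨(l.map (·⁻¹)).reverse, fun z hz => ?_, by simpa using hn, (List.prod_inv_reverse l).symm⟩
  obtain ⟨y, hy, rfl⟩ : ∃ y ∈ l, y⁻¹ = z := by simpa using hz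
  simpa [or_comm] using hl y hy

theorem wordNorm_le_of_mem_wordBall {x : G} {n : ℕ} (hx : x ∈ wordBall S n) :
    wordNorm S x ≤ n := by
  obtain ⟨l, hl, hn, hx⟩ := hx
  have hle : wordNorm S x ≤ l.length := Nat.sInf_le ⟨l, hl, rfl, hx⟩
  exact hle.trans hn

theorem exists_mem_wordBall (hS : Subgroup.closure S = ⊤) (x : G) : ∃ n, x ∈ wordBall S n := by
  have hx : x ∈ Submonoid.closure (S ∪ S⁻¹) := by
    rw [← Subgroup.closure_toSubmonoid, hS]
    trivial
  obtain ⟨l, hl, hlx⟩ := Submonoid.exists_list_of_mem_closure hx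
  exact ⟨l.length, l, hl, le_rfl, hlx⟩

theorem mem_wordBall_wordNorm (hS : Subgroup.closure S = ⊤) (x : G) :
    x ∈ wordBall S (wordNorm S x) := by
  obtain ⟨n, l, hl, -, hx⟩ := exists_mem_wordBall hS x
  obtain ⟨k, hk, hkn, hkx⟩ : wordNorm S x ∈
      {n | ∃ l : List G, (∀ y ∈ l, y ∈ S ∨ y⁻¹ ∈ S) ∧ l.length = n ∧ l.prod = x} :=
    Nat.sInf_mem ⟨l.length, l, hl, rfl, hx⟩
  exact ⟨k, hk, hkn.le, hkx⟩

theorem map_mem_wordBall (f : G →* H) {L : ℕ} (hf : ∀ x ∈ S, f x ∈ wordBall T L) {x : G} {n : ℕ}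
    (hx : x ∈ wordBall S n) : f x ∈ wordBall T (L * n) := by
  obtain ⟨l, hl, hn, rfl⟩ := hx
  refine wordBall_mono (Nat.mul_le_mul_left L hn) ?_
  clear hn
  induction l with
  | nil => simpa using one_mem_wordBall T 0
  | cons y l ih =>
    have hy : f y ∈ wordBall T L := (hl y List.mem_cons_self).elim (hf y) fun h => by
      simpa using inv_mem_wordBall (hf _ h)
    rw [List.prod_cons, map_mul, List.length_cons, mul_add_one, add_comm]
    exact mul_mem_wordBall hy (ih fun z hz => hl z (List.mem_cons_of_mem y hz))

theorem wordNorm_map_le (f : G →* H) {L : ℕ} (hS : Subgroup.closure S = ⊤)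
    (hf : ∀ x ∈ S, f x ∈ wordBall T L) (x : G) : wordNorm T (f x) ≤ L * wordNorm S x :=
  wordNorm_le_of_mem_wordBall (map_mem_wordBall f hf (mem_wordBall_wordNorm hS x))

end WordNorm

section Fiberwise

variable {ι : Type u} {G : Type v} {X : Type w} [Group G] [MulAction G X]

/-- The coordinatewise action of `ι → G` on `ι × X`: the element `y` acts on the fiber
`{i} × X` as `y i`. -/
def fiberwise (ι : Type u) (G : Type v) (X : Type w) [Group G] [MulAction G X] :
    (ι → G) →* Perm (ι × X) :=
  MonoidHom.toHomPerm
    { toFun := fun y z => (z.1, y z.1 • z.2)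
      map_one' := funext fun _ => by simp; rfl
      map_mul' := fun y y' => funext fun _ => by simp [mul_smul]; rfl }

@[simp]
theorem fiberwise_apply (y : ι → G) (z : ι × X) :
    fiberwise ι G X y z = (z.1, y z.1 • z.2) :=
  rfl

theorem fiberwise_injective [FaithfulSMul G X] :
    Function.Injective (fiberwise ι G X) := fun _ _ h => funext fun i =>
  FaithfulSMul.eq_of_smul_eq_smul fun x : X => congrArg Prod.snd (DFunLike.congr_fun h (i, x))

end Fiberwise

theorem add_le_mul_pow {ν : ℝ} (hν : 1 < ν) (n k : ℕ) :
    (n + k : ℝ) ≤ ((ν - 1)⁻¹ + k) * ν ^ n := by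
  have hbernoulli : 1 + (n : ℝ) * (ν - 1) ≤ ν ^ n := one_add_mul_sub_le_pow (by linarith) n
  have hn : (n : ℝ) ≤ (ν - 1)⁻¹ * ν ^ n := by
    rw [inv_mul_eq_div, le_div_iff₀ (by linarith)]
    linarith
  have hk : (k : ℝ) * 1 ≤ k * ν ^ n := by
    gcongr
    exact one_le_pow₀ hν.le
  linarith

theorem sum_antidiagonal_mul_le {a : ℕ → ℕ} {C lam : ℝ} (ha : ∀ n, (a n : ℝ) ≤ C * lam ^ n)
    (n : ℕ) : ((∑ p ∈ antidiagonal n, a p.1 * a p.2 : ℕ) : ℝ) ≤ (n + 1) * (C ^ 2 * lam ^ n) := by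
  push_cast
  refine (Finset.sum_le_card_nsmul _ _ (C ^ 2 * lam ^ n) fun p hp => ?_).trans_eq (by simp)
  calc (a p.1 * a p.2 : ℝ) ≤ (C * lam ^ p.1) * (C * lam ^ p.2) :=
        mul_le_mul (ha _) (ha _) (by positivity) ((Nat.cast_nonneg _).trans (ha _))
    _ = C ^ 2 * lam ^ n := by rw [← mem_antidiagonal.1 hp]; ring

/-- The Klein four-group generated by the directed generators `b`, `c`, `d` of the first
Grigorchuk group, encoded as `b = (1, 0)`, `c = (0, 1)` and `d = (1, 1)`. -/
abbrev Klein : Type := Multiplicative (ZMod 2 × ZMod 2)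

namespace Klein

/-- The automorphism `b ↦ c ↦ d ↦ b`, giving the section at the vertex `true` of the tree
automorphism defined by an element of the Klein group. -/
def rotate : Klein ≃* Klein where
  toFun x := .ofAdd (x.toAdd.2, x.toAdd.1 + x.toAdd.2)
  invFun x := .ofAdd (x.toAdd.1 + x.toAdd.2, x.toAdd.1)
  left_inv := by decide
  right_inv := by decide
  map_mul' := by decide

/-- Whether the section at the vertex `false` is the rooted flip; otherwise it is trivial. -/
def flips (x : Klein) : Bool :=
  decide (x.toAdd.1 + x.toAdd.2 = 1)

/-- The weights `b ↦ 5`, `c ↦ 4`, `d ↦ 3`, the rooted flip having weight `5`. The value at `1` is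
the weight of a directed letter with trivial tree action and non-trivial decoration. -/
def weight (x : Klein) : ℕ :=
  if x = .ofAdd (1, 1) then 3 else if x = .ofAdd (0, 1) then 4 else 5

theorem flips_mul : ∀ x y : Klein, flips (x * y) = xor (flips x) (flips y) := by decide

theorem weight_le : ∀ x : Klein, weight x ≤ 5 := by decide

theorem le_weight : ∀ x : Klein, 3 ≤ weight x := by decide

theorem weight_rotate_add_le :
    ∀ x : Klein, 10 * (weight (rotate x) + if flips x then 5 else 0) ≤ 9 * (5 + weight x) := by
  decide

end Klein

/-- The rooted flip of the binary tree, whose vertices are the finite words over `Bool`: it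
switches the first letter. -/
def flipHead : List Bool → List Bool
  | [] => []
  | x :: v => (!x) :: v

@[simp]
theorem length_flipHead (v : List Bool) : (flipHead v).length = v.length := by
  cases v <;> rfl

theorem flipHead_involutive : Function.Involutive flipHead
  | [] => rfl
  | x :: v => by simp [flipHead]

namespace Klein

/-- The action of the Klein group on the binary tree that defines the Grigorchuk group. -/
def act (x : Klein) : List Bool → List Bool
  | [] => []
  | true :: v => true :: act (rotate x) v
  | false :: v => false :: if flips x then flipHead v else v

@[simp]
theorem length_act (x : Klein) (v : List Bool) : (act x v).length = v.length := by
  induction v generalizing x with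
  | nil => rfl
  | cons y v ih =>
    cases y
    · cases h : flips x <;> simp [act, h]
    · simp [act, ih]

theorem act_one (v : List Bool) : act 1 v = v := by
  induction v with
  | nil => rfl
  | cons y v ih => cases y <;> simp [act, ih, show flips 1 = false by decide]

theorem act_mul (x y : Klein) (v : List Bool) : act (x * y) v = act x (act y v) := by
  induction v generalizing x y with
  | nil => rfl
  | cons z v ih =>
    cases z
    · cases hx : flips x <;> cases hy : flips y <;>
        simp [act, flips_mul, hx, hy, flipHead_involutive v]
    · simp [act, ih]

end Klein

/-- A family of homomorphisms `R →* H` decorating the vertices of the binary tree along the ray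
`true, true, …`: `on s` sits at the vertex of level `s + 1` on the ray and `off s` at its
sibling. -/
structure Decoration (R : Type u) (H : Type v) [Group R] [Group H] where
  /-- The decoration at `offVertex s`. -/
  off : ℕ → R →* H
  /-- The decoration at `onVertex s`. -/
  on : ℕ → R →* H

/-- The vertex of level `s + 1` that branches off the ray `true, true, …` at its last edge. -/
def offVertex (s : ℕ) : List Bool :=
  List.replicate s true ++ [false]

/-- The vertex of level `s + 1` on the ray `true, true, …`. -/
def onVertex (s : ℕ) : List Bool :=
  List.replicate s true ++ [true]

namespace Decoration

variable {R : Type u} {H : Type v} [Group R] [Group H] (D : Decoration R H)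

/-- The decoration induced on the subtree below the vertex `[true]`. -/
def shift : Decoration R H where
  off s := D.off (s + 1)
  on s := D.on (s + 1)

/-- The decoration of an arbitrary vertex, trivial off the decorated ones. -/
def label : Decoration R H → List Bool → R →* H
  | _, [] => 1
  | D, [false] => D.off 0
  | D, [true] => D.on 0
  | _, false :: _ :: _ => 1
  | D, true :: y :: v => label D.shift (y :: v)

theorem label_act (x : Klein) (v : List Bool) : D.label (x.act v) = D.label v := by
  induction v generalizing D x with
  | nil => rfl
  | cons y v ih =>
    rcases y, v with ⟨_ | _, _ | ⟨z, v⟩⟩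
    · cases h : x.flips <;> simp [Klein.act, h, flipHead]
    · cases h : x.flips <;> simp [Klein.act, h, flipHead, label]
    · rfl
    · have := ih D.shift x.rotate
      cases z <;> simpa [Klein.act, label] using this

theorem label_offVertex (s : ℕ) : D.label (offVertex s) = D.off s := by
  induction s generalizing D with
  | zero => rfl
  | succ s ih =>
    rw [← show D.shift.off s = D.off (s + 1) from rfl, ← ih]
    cases s <;> rfl

theorem label_onVertex (s : ℕ) : D.label (onVertex s) = D.on s := by
  induction s generalizing D with
  | zero => rfl
  | succ s ih =>
    rw [← show D.shift.on s = D.on (s + 1) from rfl, ← ih]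
    cases s <;> rfl

theorem label_eq_one {v : List Bool} (hoff : ∀ s, v ≠ offVertex s) (hon : ∀ s, v ≠ onVertex s) :
    D.label v = 1 := by
  induction v generalizing D with
  | nil => rfl
  | cons y v ih =>
    rcases y, v with ⟨_ | _, _ | ⟨z, v⟩⟩
    · exact absurd rfl (hoff 0)
    · rfl
    · exact absurd rfl (hon 0)
    · exact ih D.shift (fun s h => hoff (s + 1) (congrArg (true :: ·) h))
        fun s h => hon (s + 1) (congrArg (true :: ·) h)

/-- The values of the decoration at the vertices of level `s + 1`. -/
def levelGens (s : ℕ) : Set H :=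
  range (D.off s) ∪ range (D.on s)

theorem one_mem_levelGens (s : ℕ) : 1 ∈ D.levelGens s :=
  .inl ⟨1, map_one _⟩

theorem label_mem_levelGens {v : List Bool} {s : ℕ} (hv : v.length = s + 1) (r : R) :
    D.label v r ∈ D.levelGens s := by
  induction s generalizing D v with
  | zero =>
    obtain ⟨_ | _, rfl⟩ := List.length_eq_one_iff.1 hv
    · exact .inl ⟨r, rfl⟩
    · exact .inr ⟨r, rfl⟩
  | succ s ih =>
    rcases v with _ | ⟨_ | _, _ | ⟨z, v⟩⟩
    · cases hv
    · simp at hv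
    · exact D.one_mem_levelGens _
    · simp at hv
    · exact ih D.shift (Nat.succ.inj hv)

/-! ### Words in the generators -/

/-- The action on `List Bool × H` of the directed letter with tree part `β.1`; `β.2` multiplies
the fiber over each vertex by its label. -/
def directedPerm : Klein × R →* Perm (List Bool × H) :=
  MonoidHom.toHomPerm
    { toFun := fun β z => (β.1.act z.1, D.label z.1 β.2 * z.2)
      map_one' := funext fun _ => by simp [Klein.act_one]; rfl
      map_mul' := fun β β' => funext fun z => by
        change _ = (β.1.act (β'.1.act z.1), D.label (β'.1.act z.1) β.2 * (D.label z.1 β'.2 * z.2))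
        simp [Klein.act_mul, label_act, mul_assoc] }

/-- The action of a letter; `none` stands for the rooted flip. -/
def letterPerm : Option (Klein × R) → Perm (List Bool × H)
  | none => flipHead_involutive.toPerm.prodCongr (Equiv.refl H)
  | some β => D.directedPerm β

/-- The permutation of `List Bool × H` represented by a word. -/
def eval (l : List (Option (Klein × R))) : Perm (List Bool × H) :=
  (l.map D.letterPerm).prod

@[simp]
theorem letterPerm_none_apply (z : List Bool × H) :
    D.letterPerm none z = (flipHead z.1, z.2) :=
  rfl

@[simp]
theorem letterPerm_some_apply (β : Klein × R) (z : List Bool × H) :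
    D.letterPerm (some β) z = (β.1.act z.1, D.label z.1 β.2 * z.2) :=
  rfl

@[simp]
theorem eval_nil : D.eval [] = 1 :=
  rfl

@[simp]
theorem eval_cons (c : Option (Klein × R)) (l : List (Option (Klein × R))) :
    D.eval (c :: l) = D.letterPerm c * D.eval l := by
  simp [eval]

@[simp]
theorem eval_append (l l' : List (Option (Klein × R))) :
    D.eval (l ++ l') = D.eval l * D.eval l' := by
  simp [eval]

theorem letterPerm_none_mul_self : D.letterPerm none * D.letterPerm none = 1 :=
  Equiv.ext fun z => by simp [flipHead_involutive z.1]

theorem letterPerm_inv (c : Option (Klein × R)) :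
    (D.letterPerm c)⁻¹ = D.letterPerm (c.map (·⁻¹)) := by
  cases c with
  | none => exact inv_eq_of_mul_eq_one_left D.letterPerm_none_mul_self
  | some β => exact (map_inv D.directedPerm β).symm

/-- The formal inverse of a word. -/
def invWord (l : List (Option (Klein × R))) : List (Option (Klein × R)) :=
  (l.map (Option.map (·⁻¹))).reverse

theorem length_invWord (l : List (Option (Klein × R))) : (invWord l).length = l.length := by
  simp [invWord]

@[simp]
theorem eval_invWord (l : List (Option (Klein × R))) : D.eval (invWord l) = (D.eval l)⁻¹ := by
  rw [eval, eval, List.prod_inv_reverse, invWord, List.map_reverse, List.map_map, List.map_map]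
  simp only [Function.comp_def, letterPerm_inv]

theorem letterPerm_apply_levelGens (c : Option (Klein × R)) {v : List Bool} {s : ℕ}
    (hv : v.length = s + 1) (h : H) :
    (D.letterPerm c (v, h)).1.length = s + 1 ∧
      ∃ m ∈ D.levelGens s, (D.letterPerm c (v, h)).2 = m * h := by
  rcases c with _ | β
  · exact ⟨by simp [hv], 1, D.one_mem_levelGens s, (one_mul h).symm⟩
  · exact ⟨by simp [hv], _, D.label_mem_levelGens hv β.2, rfl⟩

theorem eval_apply_wordBall (l : List (Option (Klein × R))) {v : List Bool} {s : ℕ}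
    (hv : v.length = s + 1) (h : H) :
    (D.eval l (v, h)).1.length = s + 1 ∧
      ∃ m ∈ wordBall (D.levelGens s) l.length, (D.eval l (v, h)).2 = m * h := by
  induction l with
  | nil => exact ⟨hv, 1, one_mem_wordBall _ _, (one_mul h).symm⟩
  | cons c l ih =>
    obtain ⟨hlen, m, hm, hmh⟩ := ih
    obtain ⟨hlen', k, hk, hkh⟩ := D.letterPerm_apply_levelGens c hlen (D.eval l (v, h)).2
    refine ⟨by simpa using hlen', k * m, ?_, by simpa [mul_assoc, ← hmh] using hkh⟩
    rw [List.length_cons, add_comm]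
    exact mul_mem_wordBall (subset_wordBall_one _ hk) hm

theorem letterPerm_mul_right (c : Option (Klein × R)) (v : List Bool) (h k : H) :
    D.letterPerm c (v, h * k) = ((D.letterPerm c (v, h)).1, (D.letterPerm c (v, h)).2 * k) := by
  cases c <;> simp [mul_assoc]

theorem eval_mul_right (l : List (Option (Klein × R))) (v : List Bool) (h k : H) :
    D.eval l (v, h * k) = ((D.eval l (v, h)).1, (D.eval l (v, h)).2 * k) := by
  induction l with
  | nil => rfl
  | cons c l ih => simp [ih, letterPerm_mul_right]

theorem eval_apply_nil (l : List (Option (Klein × R))) (h : H) : D.eval l ([], h) = ([], h) := by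
  induction l with
  | nil => rfl
  | cons c l ih => cases c <;> simp [ih, flipHead, Klein.act, label]

/-- The action of a letter on the first level of the tree. -/
def nextBit : Option (Klein × R) → Bool → Bool
  | none, x => !x
  | some _, x => x

/-- The action of a word on the first level of the tree. -/
def outBit (l : List (Option (Klein × R))) (x : Bool) : Bool :=
  l.foldr nextBit x

/-- The word describing the action of a letter on the subtree below `[x]`. -/
def letterSection : Option (Klein × R) → Bool → List (Option (Klein × R))
  | none, _ => []
  | some β, true => [some (β.1.rotate, β.2)]
  | some β, false => if β.1.flips then [none] else []

/-- The word describing the action of a word on the subtree below `[x]`. -/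
def wordSection : List (Option (Klein × R)) → Bool → List (Option (Klein × R))
  | [], _ => []
  | c :: l, x => letterSection c (outBit l x) ++ wordSection l x

theorem letterPerm_cons_cons (c : Option (Klein × R)) (x y : Bool) (v : List Bool) (h : H) :
    D.letterPerm c (x :: y :: v, h) =
      (D.shift.eval (letterSection c x) (y :: v, h)).map (nextBit c x :: ·) id := by
  rcases c with _ | β
  · rfl
  · cases x
    · cases hx : β.1.flips <;> simp [letterSection, hx, nextBit, Klein.act, label]
    · simp [letterSection, nextBit, Klein.act, label]

theorem eval_singleton_fst (l : List (Option (Klein × R))) (x : Bool) (h : H) :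
    (D.eval l ([x], h)).1 = [outBit l x] := by
  induction l with
  | nil => rfl
  | cons c l ih =>
    obtain ⟨k, hk⟩ : ∃ k, D.eval l ([x], h) = ([outBit l x], k) := ⟨_, Prod.ext ih rfl⟩
    rw [eval_cons, Perm.mul_apply, hk]
    cases c with
    | none => rfl
    | some β =>
      change β.1.act [outBit l x] = [outBit l x]
      cases outBit l x
      · cases h : β.1.flips <;> simp [Klein.act, flipHead, h]
      · rfl

theorem eval_cons_cons (l : List (Option (Klein × R))) (x y : Bool) (v : List Bool) (h : H) :
    D.eval l (x :: y :: v, h) =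
      (D.shift.eval (wordSection l x) (y :: v, h)).map (outBit l x :: ·) id := by
  induction l with
  | nil => rfl
  | cons c l ih =>
    have hlen := (D.shift.eval_apply_wordBall (wordSection l x) (v := y :: v) rfl h).1
    obtain ⟨z, w, k, hk⟩ : ∃ z w k, D.shift.eval (wordSection l x) (y :: v, h) = (z :: w, k) := by
      obtain ⟨z, w, hzw⟩ := List.exists_cons_of_length_eq_add_one hlen
      exact ⟨z, w, _, Prod.ext hzw rfl⟩
    simp [ih, wordSection, hk, letterPerm_cons_cons, outBit]

theorem eval_eq_eval {l l' : List (Option (Klein × R))}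
    (htop : ∀ x, D.eval l ([x], 1) = D.eval l' ([x], 1))
    (hsec : ∀ x, D.shift.eval (wordSection l x) = D.shift.eval (wordSection l' x)) :
    D.eval l = D.eval l' := by
  ext1 ⟨v, h⟩
  rcases v with _ | ⟨x, _ | ⟨y, v⟩⟩
  · rw [eval_apply_nil, eval_apply_nil]
  · rw [← one_mul h, eval_mul_right, eval_mul_right, htop]
  · have hout : [outBit l x] = [outBit l' x] := by
      rw [← D.eval_singleton_fst l x 1, ← D.eval_singleton_fst l' x 1, htop]
    rw [eval_cons_cons, eval_cons_cons, hsec, List.singleton_inj.1 hout]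

/-! ### Contraction of weights -/

open Classical in
/-- The weight of a letter, for which passing to sections is contracting. -/
noncomputable def letterWeight : Option (Klein × R) → ℕ
  | none => 5
  | some β => if β = 1 then 0 else β.1.weight

/-- The total weight of the letters of a word. -/
noncomputable def weight (l : List (Option (Klein × R))) : ℕ :=
  (l.map letterWeight).sum

@[simp]
theorem weight_nil : weight ([] : List (Option (Klein × R))) = 0 :=
  rfl

@[simp]
theorem weight_cons (c : Option (Klein × R)) (l : List (Option (Klein × R))) :
    weight (c :: l) = letterWeight c + weight l := by
  simp [weight]

@[simp]
theorem weight_append (l l' : List (Option (Klein × R))) :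
    weight (l ++ l') = weight l + weight l' := by
  simp [weight]

@[simp]
theorem letterWeight_none : letterWeight (none : Option (Klein × R)) = 5 :=
  rfl

@[simp]
theorem letterWeight_some_one : letterWeight (some (1 : Klein × R)) = 0 :=
  if_pos rfl

theorem letterWeight_some {β : Klein × R} (hβ : β ≠ 1) :
    letterWeight (some β) = β.1.weight :=
  if_neg hβ

theorem letterWeight_some_le (β : Klein × R) : letterWeight (some β) ≤ β.1.weight := by
  by_cases hβ : β = 1
  · simp [hβ]
  · exact (letterWeight_some hβ).le

theorem letterWeight_le (c : Option (Klein × R)) : letterWeight c ≤ 5 := by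
  cases c with
  | none => rfl
  | some β => exact (letterWeight_some_le β).trans β.1.weight_le

theorem letterWeight_mul_le (β γ : Klein × R) :
    letterWeight (some (β * γ)) ≤ letterWeight (some β) + letterWeight (some γ) := by
  by_cases hβ : β = 1
  · simp [hβ]
  by_cases hγ : γ = 1
  · simp [hγ]
  have hmul := letterWeight_le (some (β * γ))
  rw [letterWeight_some hβ, letterWeight_some hγ]
  linarith [β.1.le_weight, γ.1.le_weight]

theorem weight_le_five_mul_length (l : List (Option (Klein × R))) :
    weight l ≤ 5 * l.length := by
  induction l with
  | nil => rfl
  | cons c l ih =>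
    rw [weight_cons, List.length_cons]
    linarith [letterWeight_le c]

theorem exists_eval_eq_length_le_weight (l : List (Option (Klein × R))) :
    ∃ l', D.eval l' = D.eval l ∧ l'.length ≤ weight l := by
  induction l with
  | nil => exact ⟨[], rfl, le_rfl⟩
  | cons c l ih =>
    obtain ⟨l', heval, hlen⟩ := ih
    by_cases hc : c = some 1
    · exact ⟨l', by simp [hc, heval, letterPerm], by simpa [hc] using hlen⟩
    · have hpos : 0 < letterWeight c := by
        rcases c with _ | β
        · simp
        · rw [letterWeight_some fun h => hc (congrArg some h)]
          linarith [β.1.le_weight]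
      exact ⟨c :: l', by simp [heval], by simp only [List.length_cons, weight_cons]; omega⟩

/-- The word `β₀ a β₁ a β₂ ⋯` in which directed letters alternate with the rooted flip `a`. -/
def alternatingWord (β₀ : Klein × R) (L : List (Klein × R)) : List (Option (Klein × R)) :=
  some β₀ :: L.flatMap fun β => [none, some β]

theorem exists_alternatingWord (l : List (Option (Klein × R))) :
    ∃ β₀ L, D.eval (alternatingWord β₀ L) = D.eval l ∧
      weight (alternatingWord β₀ L) ≤ weight l := by
  induction l with
  | nil => exact ⟨1, [], by simp [alternatingWord, letterPerm], by simp [alternatingWord]⟩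
  | cons c l ih =>
    obtain ⟨β, L, heval, hweight⟩ := ih
    simp only [alternatingWord, eval_cons, weight_cons] at heval hweight
    rcases c with _ | γ
    · exact ⟨1, β :: L, by simp [alternatingWord, letterPerm, ← heval],
        by simpa [alternatingWord] using hweight⟩
    · refine ⟨γ * β, L, by simp [alternatingWord, letterPerm, ← heval, mul_assoc], ?_⟩
      simp only [alternatingWord, weight_cons]
      linarith [letterWeight_mul_le γ β]

/-- The total weight of the two sections of a word. -/
noncomputable def sectionWeight (l : List (Option (Klein × R))) : ℕ :=
  weight (wordSection l false) + weight (wordSection l true)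

theorem sectionWeight_cons (c : Option (Klein × R)) (l : List (Option (Klein × R))) :
    sectionWeight (c :: l) =
      weight (letterSection c false) + weight (letterSection c true) + sectionWeight l := by
  have hout : outBit l true = !outBit l false := by
    induction l with
    | nil => rfl
    | cons c l ih => cases c <;> simp_all [outBit, nextBit]
  cases h : outBit l false <;> simp [sectionWeight, wordSection, hout, h] <;> ring

theorem sectionWeight_some_cons_le (β : Klein × R) (l : List (Option (Klein × R))) :
    10 * sectionWeight (some β :: l) ≤
      9 * (5 + letterWeight (some β)) + 10 * sectionWeight l := by
  by_cases hβ : β = 1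
  · simp [sectionWeight_cons, letterSection, hβ, show Klein.flips 1 = false by decide,
      show ((1, 1) : Klein × R) = 1 from rfl]
  · have hrot := letterWeight_some_le (β.1.rotate, β.2)
    have hcontr := β.1.weight_rotate_add_le
    rw [letterWeight_some hβ, sectionWeight_cons]
    cases h : β.1.flips <;> simp_all [letterSection] <;> omega

theorem sectionWeight_alternatingWord_le (β₀ : Klein × R) (L : List (Klein × R)) :
    10 * sectionWeight (alternatingWord β₀ L) ≤ 9 * weight (alternatingWord β₀ L) + 45 := by
  have htail : 10 * sectionWeight (L.flatMap fun β => [none, some β]) ≤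
      9 * weight (L.flatMap fun β => [none, some β]) := by
    induction L with
    | nil => rfl
    | cons β L ih =>
      have hβ := sectionWeight_some_cons_le β (L.flatMap fun β => [none, some β])
      simp only [List.flatMap_cons, List.cons_append, List.nil_append, weight_cons,
        letterWeight_none]
      rw [sectionWeight_cons]
      simp only [letterSection, weight_nil]
      omega
  have hhead := sectionWeight_some_cons_le β₀ (L.flatMap fun β => [none, some β])
  simp only [alternatingWord, weight_cons]
  omega

/-! ### Subexponential growth -/

/-- The group generated by the values of the decoration at the vertices of level `s + 1`. -/
def levelGroup (s : ℕ) : Subgroup H :=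
  Subgroup.closure (D.levelGens s)

/-- The permutations represented by words of weight at most `n`. -/
def weightBall (n : ℕ) : Set (Perm (List Bool × H)) :=
  {f | ∃ l, weight l ≤ n ∧ D.eval l = f}

theorem wordBall_levelGens_subset (s n : ℕ) : wordBall (D.levelGens s) n ⊆ D.levelGroup s := by
  rintro x ⟨l, hl, -, rfl⟩
  exact list_prod_mem fun y hy => (hl y hy).elim (fun h => Subgroup.subset_closure h)
    fun h => inv_mem_iff.1 (Subgroup.subset_closure h)

theorem eval_replicate_some_one (n : ℕ) : D.eval (List.replicate n (some 1)) = 1 := by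
  simp [eval, letterPerm]

theorem weightBall_subset_range (n : ℕ) :
    D.weightBall n ⊆ range fun l : List.Vector (Option (Klein × R)) n => D.eval l.1 := by
  rintro _ ⟨l, hl, rfl⟩
  obtain ⟨l', heval, hlen⟩ := D.exists_eval_eq_length_le_weight l
  exact ⟨⟨l' ++ List.replicate (n - l'.length) (some 1), by simp; omega⟩,
    by simp [eval_replicate_some_one, heval]⟩

theorem finite_weightBall [Finite R] (n : ℕ) : (D.weightBall n).Finite := by
  have := Fintype.ofFinite R
  exact (Set.finite_range _).subset (D.weightBall_subset_range n)

theorem ncard_weightBall_le [Finite R] (n : ℕ) :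
    (D.weightBall n).ncard ≤ Nat.card (Option (Klein × R)) ^ n := by
  have := Fintype.ofFinite R
  refine (Set.ncard_le_ncard (D.weightBall_subset_range n) (Set.finite_range _)).trans ?_
  rw [← Set.image_univ]
  refine (Set.ncard_image_le Set.finite_univ).trans ?_
  rw [Set.ncard_univ, Nat.card_eq_fintype_card, Nat.card_eq_fintype_card, card_vector]

theorem eval_singleton_mem (l : List (Option (Klein × R))) (x : Bool) :
    D.eval l ([x], 1) ∈ range (fun y : Bool => [y]) ×ˢ (D.levelGroup 0 : Set H) := by
  obtain ⟨m, hm, hmul⟩ := (D.eval_apply_wordBall l (v := [x]) (s := 0) rfl 1).2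
  refine ⟨⟨outBit l x, (D.eval_singleton_fst l x 1).symm⟩, ?_⟩
  rw [hmul, mul_one]
  exact D.wordBall_levelGens_subset 0 _ hm

/-- The possible pairs of sections of the elements of `D.weightBall n`. -/
def sectionPairs (n : ℕ) : Set (Perm (List Bool × H) × Perm (List Bool × H)) :=
  ⋃ p ∈ antidiagonal ((9 * n + 45) / 10), D.shift.weightBall p.1 ×ˢ D.shift.weightBall p.2

theorem finite_sectionPairs [Finite R] (n : ℕ) : (D.sectionPairs n).Finite :=
  (Finset.finite_toSet _).biUnion fun _ _ =>
    (D.shift.finite_weightBall _).prod (D.shift.finite_weightBall _)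

theorem ncard_sectionPairs_le (n : ℕ) :
    (D.sectionPairs n).ncard ≤ ∑ p ∈ antidiagonal ((9 * n + 45) / 10),
      (D.shift.weightBall p.1).ncard * (D.shift.weightBall p.2).ncard := by
  refine (Finset.set_ncard_biUnion_le _ _).trans (Finset.sum_le_sum fun p _ => ?_)
  rw [Set.ncard_prod]

theorem exists_eval_eq_sections_mem {n : ℕ} {f : Perm (List Bool × H)} (hf : f ∈ D.weightBall n) :
    ∃ l, D.eval l = f ∧
      (D.shift.eval (wordSection l false), D.shift.eval (wordSection l true)) ∈
        D.sectionPairs n := by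
  obtain ⟨l, hl, rfl⟩ := hf
  obtain ⟨β₀, L, heval, hweight⟩ := D.exists_alternatingWord l
  refine ⟨alternatingWord β₀ L, heval, ?_⟩
  have hsec := sectionWeight_alternatingWord_le β₀ L
  rw [sectionWeight] at hsec
  refine Set.mem_biUnion (x := (weight (wordSection (alternatingWord β₀ L) false),
    (9 * n + 45) / 10 - weight (wordSection (alternatingWord β₀ L) false))) ?_
    ⟨⟨_, le_rfl, rfl⟩, _, ?_, rfl⟩
  · simp only [Finset.mem_coe, mem_antidiagonal]
    omega
  · dsimp only
    omega

theorem ncard_weightBall_le_sum [Finite R] [Finite (D.levelGroup 0)] (n : ℕ) :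
    (D.weightBall n).ncard ≤ (2 * Nat.card (D.levelGroup 0)) ^ 2 *
      ∑ p ∈ antidiagonal ((9 * n + 45) / 10),
        (D.shift.weightBall p.1).ncard * (D.shift.weightBall p.2).ncard := by
  choose! word heval hsec using fun f => D.exists_eval_eq_sections_mem (n := n) (f := f)
  set A : Set (List Bool × H) := range (fun y : Bool => [y]) ×ˢ (D.levelGroup 0 : Set H)
  have hA : A.ncard = 2 * Nat.card (D.levelGroup 0) := by
    rw [Set.ncard_prod, ← Set.image_univ,
      Set.ncard_image_of_injective _ fun _ _ h => List.singleton_inj.1 h, Set.ncard_univ,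
      Nat.card_eq_fintype_card, Fintype.card_bool]
    rfl
  have hAfin : A.Finite := (Set.finite_range _).prod (Set.toFinite _)
  refine (Set.ncard_le_ncard_of_injOn (t := (A ×ˢ A) ×ˢ D.sectionPairs n)
    (fun f => ((f ([false], 1), f ([true], 1)),
      (D.shift.eval (wordSection (word f) false), D.shift.eval (wordSection (word f) true))))
    (fun f hf => ⟨?_, hsec f hf⟩) (fun f hf f' hf' hff' => ?_)
    ((hAfin.prod hAfin).prod (D.finite_sectionPairs n))).trans ?_
  · dsimp only
    rw [← heval f hf]
    exact ⟨D.eval_singleton_mem _ _, D.eval_singleton_mem _ _⟩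
  · simp only [Prod.mk.injEq] at hff'
    rw [← heval f hf, ← heval f' hf'] at hff' ⊢
    exact D.eval_eq_eval (Bool.forall_bool.2 hff'.1) (Bool.forall_bool.2 (by
      simpa only [heval f hf, heval f' hf'] using hff'.2))
  · rw [Set.ncard_prod, Set.ncard_prod, hA, ← sq]
    exact Nat.mul_le_mul_left _ (D.ncard_sectionPairs_le n)

/-- The weight balls of all decorations with finite level groups grow at most like `lam ^ n`. The
bound is over all decorations because the recurrence of `ncard_weightBall_le_sum` relates a
decoration to its shift. -/
def GrowthBound (R : Type u) (H : Type v) [Group R] [Group H] (lam : ℝ) : Prop :=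
  ∀ D : Decoration R H, (∀ s, Finite (D.levelGroup s)) →
    ∃ C : ℝ, ∀ n, ((D.weightBall n).ncard : ℝ) ≤ C * lam ^ n

/- The contraction factor `9 / 10` gains more than the factor `ν ^ n` needed to absorb the number
of summands as soon as `9 * (m + 1) ≤ 10 * (m - 1)`. -/
theorem GrowthBound.pow_of_pow_succ [Finite R] {ν : ℝ} (hν : 1 < ν) {m : ℕ} (hm : 19 ≤ m)
    (h : GrowthBound R H (ν ^ (m + 1))) : GrowthBound R H (ν ^ m) := by
  intro D hD
  obtain ⟨j, rfl⟩ := Nat.exists_eq_add_of_le' hm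
  obtain ⟨C, hC⟩ := h D.shift fun s => hD (s + 1)
  set k := (2 * Nat.card (D.levelGroup 0)) ^ 2
  refine ⟨k * (((ν - 1)⁻¹ + 6) * (C ^ 2 * ν ^ (5 * (j + 20)))), fun n => ?_⟩
  have : 0 < ν := by linarith
  set N := (9 * n + 45) / 10
  have hNn : N + 1 ≤ n + 6 := by omega
  have hexp : (j + 19 + 1) * N ≤ 5 * (j + 20) + (j + 18) * n := by
    have hN10 : 10 * N ≤ 9 * n + 45 := by omega
    nlinarith
  calc ((D.weightBall n).ncard : ℝ)
      ≤ k * ((N + 1) * (C ^ 2 * (ν ^ (j + 19 + 1)) ^ N)) := by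
        refine (Nat.cast_le.2 (D.ncard_weightBall_le_sum n)).trans ?_
        rw [Nat.cast_mul]
        gcongr
        exact sum_antidiagonal_mul_le hC N
    _ ≤ k * ((((ν - 1)⁻¹ + 6) * ν ^ n) * (C ^ 2 * ν ^ (5 * (j + 20) + (j + 18) * n))) := by
        have : 0 < ν - 1 := by linarith
        rw [← pow_mul]
        gcongr ?_ * (?_ * (_ * ?_))
        · exact (by exact_mod_cast hNn : (N + 1 : ℝ) ≤ n + 6).trans (add_le_mul_pow hν n 6)
        · exact pow_le_pow_right₀ hν.le hexp
    _ = k * (((ν - 1)⁻¹ + 6) * (C ^ 2 * ν ^ (5 * (j + 20)))) * (ν ^ (j + 19)) ^ n := by ring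

theorem growthBound_pow [Finite R] {ν : ℝ} (hν : 1 < ν) : GrowthBound R H (ν ^ 19) := by
  obtain ⟨N, hN⟩ := pow_unbounded_of_one_lt (Nat.card (Option (Klein × R)) : ℝ) hν
  have hlarge : GrowthBound R H (ν ^ (N + 19)) := fun D _ => ⟨1, fun n => by
    calc ((D.weightBall n).ncard : ℝ) ≤ (Nat.card (Option (Klein × R)) : ℝ) ^ n := by
          exact_mod_cast D.ncard_weightBall_le n
      _ ≤ 1 * (ν ^ (N + 19)) ^ n := by
          rw [one_mul]
          gcongr
          exact hN.le.trans (pow_le_pow_right₀ hν.le (by omega))⟩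
  exact Nat.decreasingInduction' (P := fun m => GrowthBound R H (ν ^ m))
    (fun m _ hm h => h.pow_of_pow_succ hν hm) (by omega) hlarge

/-! ### The group of a decoration -/

/-- The group generated by the letters of a decoration. -/
def group : Subgroup (Perm (List Bool × H)) :=
  Subgroup.closure (range D.letterPerm)

/-- The generators of `D.group`. -/
def letter (c : Option (Klein × R)) : D.group :=
  ⟨D.letterPerm c, Subgroup.subset_closure ⟨c, rfl⟩⟩

theorem closure_range_letter : Subgroup.closure (range D.letter) = ⊤ := by
  have hrange : range D.letter = (↑) ⁻¹' range D.letterPerm :=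
    Set.ext fun f => exists_congr fun c => Subtype.ext_iff
  rw [hrange]
  exact Subgroup.closure_closure_coe_preimage

theorem coe_prod_map_letter (l : List (Option (Klein × R))) :
    ((l.map D.letter).prod : Perm (List Bool × H)) = D.eval l := by
  rw [← D.group.subtype_apply, map_list_prod, List.map_map]
  rfl

theorem letter_inv (c : Option (Klein × R)) : (D.letter c)⁻¹ = D.letter (c.map (·⁻¹)) :=
  Subtype.ext (D.letterPerm_inv c)

theorem eval_mem_group (l : List (Option (Klein × R))) : D.eval l ∈ D.group :=
  D.coe_prod_map_letter l ▸ SetLike.coe_mem _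

theorem mem_wordBall_range_letter {f : D.group} {n : ℕ} :
    f ∈ wordBall (range D.letter) n ↔ ∃ l, l.length ≤ n ∧ D.eval l = f := by
  constructor
  · rintro ⟨k, hk, hkn, rfl⟩
    obtain ⟨l, rfl⟩ : k ∈ range (List.map D.letter) := by
      rw [Set.range_list_map]
      refine fun x hx => (hk x hx).elim id fun ⟨c, hc⟩ => ⟨c.map (·⁻¹), ?_⟩
      rw [← letter_inv, hc, inv_inv]
    exact ⟨l, by simpa using hkn, (D.coe_prod_map_letter l).symm⟩
  · rintro ⟨l, hl, hf⟩
    exact ⟨l.map D.letter, by simp +contextual, by simpa using hl,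
      Subtype.ext ((D.coe_prod_map_letter l).trans hf)⟩

theorem subexpGrowth_letter [Finite R] (hD : ∀ s, Finite (D.levelGroup s)) :
    SubexpGrowth (range D.letter) := by
  intro lam hlam
  obtain ⟨ν, hν, rfl⟩ : ∃ ν : ℝ, 1 < ν ∧ ν ^ 96 = lam :=
    ⟨lam ^ ((96 : ℕ) : ℝ)⁻¹, Real.one_lt_rpow hlam (by norm_num),
      Real.rpow_inv_natCast_pow (by linarith) (by norm_num)⟩
  obtain ⟨C, hC⟩ := growthBound_pow hν D hD
  filter_upwards [(tendsto_pow_atTop_atTop_of_one_lt hν).eventually_gt_atTop C] with n hn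
  calc (Nat.card (wordBall (range D.letter) n) : ℝ) ≤ (D.weightBall (5 * n)).ncard := by
        rw [Nat.cast_le]
        refine Set.ncard_le_ncard_of_injOn Subtype.val (fun f hf => ?_)
          Subtype.val_injective.injOn (D.finite_weightBall _)
        obtain ⟨l, hl, heval⟩ := D.mem_wordBall_range_letter.1 hf
        exact ⟨l, (weight_le_five_mul_length l).trans (by omega), heval⟩
    _ ≤ C * (ν ^ 19) ^ (5 * n) := hC _
    _ < ν ^ n * (ν ^ 19) ^ (5 * n) := by gcongr
    _ = (ν ^ 96) ^ n := by ring

end Decoration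

/-! ### Realizing commutators at a single vertex -/

/-- The action on the binary tree of a letter without decoration. -/
def treePerm : Option Klein → Perm (List Bool)
  | none => flipHead_involutive.toPerm
  | some x => MonoidHom.toHomPerm
      { toFun := Klein.act, map_one' := funext Klein.act_one,
        map_mul' := fun x y => funext (Klein.act_mul x y) } x

/-- The action on the binary tree of a word without decorations. -/
def treeEval (u : List (Option Klein)) : Perm (List Bool) :=
  (u.map treePerm).prod

@[simp]
theorem treePerm_none_apply (v : List Bool) : treePerm none v = flipHead v :=
  rfl

@[simp]
theorem treePerm_some_apply (x : Klein) (v : List Bool) : treePerm (some x) v = x.act v :=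
  rfl

@[simp]
theorem treeEval_nil : treeEval [] = 1 :=
  rfl

@[simp]
theorem treeEval_cons (c : Option Klein) (u : List (Option Klein)) :
    treeEval (c :: u) = treePerm c * treeEval u := by
  simp [treeEval]

@[simp]
theorem treeEval_append (u u' : List (Option Klein)) :
    treeEval (u ++ u') = treeEval u * treeEval u' := by
  simp [treeEval]

@[simp]
theorem length_treeEval (u : List (Option Klein)) (v : List Bool) :
    (treeEval u v).length = v.length := by
  induction u with
  | nil => rfl
  | cons c u ih => cases c <;> simp [ih]

/-- A word acting below the vertex `[true]` as the given letter acts on the whole tree. -/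
def liftLetter : Option Klein → List (Option Klein)
  | none => [none, some (.ofAdd (1, 0)), none]
  | some x => [some (Klein.rotate.symm x)]

/-- A word moving `onVertex s` to `offVertex s`. -/
def connector : ℕ → List (Option Klein)
  | 0 => [none]
  | s + 1 => (connector s).flatMap liftLetter

theorem treeEval_liftLetter_cons_true (c : Option Klein) (v : List Bool) :
    treeEval (liftLetter c) (true :: v) = true :: treePerm c v := by
  cases c with
  | none => simp [liftLetter, flipHead, Klein.act,
      show Klein.flips (.ofAdd (1, 0)) = true by decide]
  | some x => simp [liftLetter, Klein.act]

theorem treeEval_flatMap_liftLetter_cons_true (u : List (Option Klein)) (v : List Bool) :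
    treeEval (u.flatMap liftLetter) (true :: v) = true :: treeEval u v := by
  induction u with
  | nil => rfl
  | cons c u ih => simp [ih, treeEval_liftLetter_cons_true]

theorem treeEval_connector_onVertex (s : ℕ) :
    treeEval (connector s) (onVertex s) = offVertex s := by
  induction s with
  | zero => rfl
  | succ s ih =>
    exact (treeEval_flatMap_liftLetter_cons_true _ (onVertex s)).trans
      (congrArg (true :: ·) ih)

theorem eq_of_treeEval_connector_onVertex {s t : ℕ}
    (h : treeEval (connector s) (onVertex t) = offVertex t) : t = s := by
  induction s generalizing t with
  | zero =>
    cases t with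
    | zero => rfl
    | succ t => simp [connector, onVertex, offVertex, flipHead, List.replicate_succ] at h
  | succ s ih =>
    cases t with
    | zero => simp [connector, onVertex, offVertex, treeEval_flatMap_liftLetter_cons_true] at h
    | succ t =>
      have h' : true :: treeEval (connector s) (onVertex t) = true :: offVertex t :=
        (treeEval_flatMap_liftLetter_cons_true _ (onVertex t)).symm.trans h
      exact congrArg _ (ih (List.cons_injective h'))

theorem length_connector_add_one (s : ℕ) : (connector s).length + 1 = 2 ^ (s + 1) := by
  have hlength (u : List (Option Klein)) :
      (u.flatMap liftLetter).length = u.length + 2 * u.count none := by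
    induction u with
    | nil => rfl
    | cons c u ih => cases c <;> simp [liftLetter, ih] <;> ring
  have hcount (u : List (Option Klein)) :
      (u.flatMap liftLetter).count none = 2 * u.count none := by
    induction u with
    | nil => rfl
    | cons c u ih => cases c <;> simp [liftLetter, ih, mul_add]
  have hnone (s : ℕ) : (connector s).count none = 2 ^ s := by
    induction s with
    | zero => rfl
    | succ s ih => rw [connector, hcount, ih, pow_succ']
  induction s with
  | zero => rfl
  | succ s ih => rw [connector, hlength, hnone, add_right_comm, ih]; ring

theorem length_offVertex (s : ℕ) : (offVertex s).length = s + 1 := by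
  simp [offVertex]

theorem length_onVertex (s : ℕ) : (onVertex s).length = s + 1 := by
  simp [onVertex]

namespace Decoration

section

variable {R : Type u} {H : Type v} [Group R] [Group H] (D : Decoration R H)

/-- The word `u` with trivial decorations. -/
def undecorated (R : Type u) [Group R] (u : List (Option Klein)) : List (Option (Klein × R)) :=
  u.map (Option.map (·, 1))

theorem eval_undecorated (u : List (Option Klein)) :
    D.eval (undecorated R u) = (treeEval u).prodCongr (Equiv.refl H) := by
  induction u with
  | nil => rfl
  | cons c u ih =>
    rw [undecorated, List.map_cons, eval_cons, ← undecorated, ih]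
    ext ⟨v, h⟩ : 1
    cases c <;> simp

theorem letterPerm_some_one_left (r : R) :
    D.letterPerm (some (1, r)) = fiberwise (List Bool) H H fun v => D.label v r :=
  Equiv.ext fun z => by simp [Klein.act_one]

theorem eval_conj_undecorated (u : List (Option Klein)) (r : R) :
    D.eval (undecorated R u ++ some (1, r) :: invWord (undecorated R u)) =
      fiberwise (List Bool) H H fun v => D.label ((treeEval u)⁻¹ v) r := by
  ext1 z
  simp [eval_undecorated, letterPerm_some_one_left]

end

section

variable {P : Type u} {F : ℕ → Type v} [CommGroup P] [∀ s, Group (F s)] (φ ψ : ∀ s, P →* F s)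

/-- The decoration whose labels at `offVertex s` and `onVertex s` are `φ s` and `ψ s`, where the
two copies of `P` act independently. -/
def ofPair : Decoration (P × P) (∀ s, F s) where
  off s := (MonoidHom.mulSingle F s).comp ((φ s).comp (.fst P P))
  on s := (MonoidHom.mulSingle F s).comp ((ψ s).comp (.snd P P))

theorem label_ofPair_fst_of_ne {v : List Bool} (hv : ∀ s, v ≠ offVertex s) (p : P) :
    (ofPair φ ψ).label v (p, 1) = 1 := by
  by_cases hon : ∃ s, v = onVertex s
  · obtain ⟨s, rfl⟩ := hon
    rw [label_onVertex]
    simp [ofPair]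
  · rw [label_eq_one _ hv (not_exists.1 hon), MonoidHom.one_apply]

theorem label_ofPair_snd_of_ne {v : List Bool} (hv : ∀ s, v ≠ onVertex s) (p : P) :
    (ofPair φ ψ).label v (1, p) = 1 := by
  by_cases hoff : ∃ s, v = offVertex s
  · obtain ⟨s, rfl⟩ := hoff
    rw [label_offVertex]
    simp [ofPair]
  · rw [label_eq_one _ (not_exists.1 hoff) hv, MonoidHom.one_apply]

/-- A word acting on the fiber over `offVertex s` by `ψ s p * (φ s p)⁻¹`. -/
def quotientWord (s : ℕ) (p : P) : List (Option (Klein × (P × P))) :=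
  undecorated (P × P) (connector s) ++
    some (1, (1, p)) :: invWord (undecorated (P × P) (connector s)) ++ [some (1, (p⁻¹, 1))]

/-- The commutator of two quotient words. -/
def commutatorWord (s : ℕ) (p q : P) : List (Option (Klein × (P × P))) :=
  quotientWord s p ++ quotientWord s q ++ invWord (quotientWord s p) ++ invWord (quotientWord s q)

theorem length_commutatorWord (s : ℕ) (p q : P) :
    (commutatorWord s p q).length = 2 ^ (s + 4) := by
  have h := length_connector_add_one s
  simp [commutatorWord, quotientWord, length_invWord, undecorated, pow_succ] at h ⊢
  omega

theorem eval_quotientWord (s : ℕ) (p : P) :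
    (ofPair φ ψ).eval (quotientWord s p) =
      fiberwise (List Bool) (∀ s, F s) (∀ s, F s) fun v =>
        (ofPair φ ψ).label ((treeEval (connector s))⁻¹ v) (1, p) *
          ((ofPair φ ψ).label v (p, 1))⁻¹ := by
  have hinv (v : List Bool) :
      ((ofPair φ ψ).label v (p, 1))⁻¹ = (ofPair φ ψ).label v (p⁻¹, 1) := by
    rw [← map_inv, Prod.inv_mk, inv_one]
  simp only [hinv]
  rw [quotientWord, eval_append, eval_conj_undecorated, eval_cons, eval_nil, mul_one,
    letterPerm_some_one_left, ← map_mul]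
  rfl

theorem label_connector_inv_offVertex_of_ne {s t : ℕ} (hts : t ≠ s) (p : P) :
    (ofPair φ ψ).label ((treeEval (connector s))⁻¹ (offVertex t)) (1, p) = 1 := by
  refine label_ofPair_snd_of_ne φ ψ (fun r hr => hts ?_) p
  have hmove : treeEval (connector s) (onVertex r) = offVertex t :=
    (Perm.inv_eq_iff_eq.1 hr).symm
  obtain rfl : r = t := by
    simpa [length_onVertex, length_offVertex] using congrArg List.length hmove
  exact eq_of_treeEval_connector_onVertex hmove

theorem label_connector_inv_offVertex_self (s : ℕ) (p : P) :
    (ofPair φ ψ).label ((treeEval (connector s))⁻¹ (offVertex s)) (1, p) =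
      Pi.mulSingle s (ψ s p) := by
  rw [Perm.inv_eq_iff_eq.2 (treeEval_connector_onVertex s).symm, label_onVertex]
  rfl

/-- The action of `F s` on the fiber over `offVertex s`. -/
def vertexHom (F : ℕ → Type v) [∀ s, Group (F s)] (s : ℕ) : F s →* Perm (List Bool × ∀ s, F s) :=
  (fiberwise (List Bool) (∀ s, F s) (∀ s, F s)).comp
    ((MonoidHom.mulSingle (fun _ => ∀ s, F s) (offVertex s)).comp (MonoidHom.mulSingle F s))

theorem vertexHom_injective (s : ℕ) : Function.Injective (vertexHom F s) :=
  fiberwise_injective.comp ((Pi.mulSingle_injective _).comp (Pi.mulSingle_injective s))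

/- Away from `offVertex s` at most one of the two families of labels is non-trivial, and each of
them has commuting values. -/
theorem eval_commutatorWord (s : ℕ) (p q : P) :
    (ofPair φ ψ).eval (commutatorWord s p q) =
      vertexHom F s ⁅ψ s p * (φ s p)⁻¹, ψ s q * (φ s q)⁻¹⁆ := by
  simp only [commutatorWord, eval_append, eval_invWord, eval_quotientWord, ← commutatorElement_def,
    ← map_commutatorElement]
  refine congrArg (fiberwise (List Bool) _ _) (funext fun v => ?_)
  change ⁅(_ : ∀ s, F s), _⁆ = (Pi.mulSingle (offVertex s) _ : List Bool → ∀ s, F s) v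
  beta_reduce
  by_cases hv : ∃ t, v = offVertex t
  · obtain ⟨t, rfl⟩ := hv
    rcases eq_or_ne t s with rfl | hts
    · simp only [label_connector_inv_offVertex_self, label_offVertex, Pi.mulSingle_eq_same]
      simp [ofPair, commutatorElement_def, Pi.mulSingle_mul, Pi.mulSingle_inv]
    · have hne : offVertex t ≠ offVertex s := fun h => hts <| by
        simpa [length_offVertex] using congrArg List.length h
      rw [Pi.mulSingle_eq_of_ne hne, label_connector_inv_offVertex_of_ne φ ψ hts,
        label_connector_inv_offVertex_of_ne φ ψ hts, one_mul, one_mul, ← map_inv, ← map_inv,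
        commutatorElement_eq_one_iff_commute]
      exact (Commute.all _ _).map _
  · rw [not_exists] at hv
    rw [Pi.mulSingle_eq_of_ne (hv s), label_ofPair_fst_of_ne φ ψ hv,
      label_ofPair_fst_of_ne φ ψ hv, inv_one, mul_one, mul_one,
      commutatorElement_eq_one_iff_commute]
    exact (Commute.all _ _).map _

theorem levelGens_ofPair (s : ℕ) :
    (ofPair φ ψ).levelGens s ⊆ MonoidHom.mulSingle F s '' (range (φ s) ∪ range (ψ s)) := by
  rintro _ (⟨p, rfl⟩ | ⟨p, rfl⟩)
  · exact ⟨φ s p.1, .inl ⟨p.1, rfl⟩, rfl⟩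
  · exact ⟨ψ s p.2, .inr ⟨p.2, rfl⟩, rfl⟩

theorem finite_levelGroup_ofPair (s : ℕ) [Finite (F s)] :
    Finite ((ofPair φ ψ).levelGroup s) := by
  have hle : (ofPair φ ψ).levelGroup s ≤ (MonoidHom.mulSingle F s).range :=
    (Subgroup.closure_le _).2 ((levelGens_ofPair φ ψ s).trans (Set.image_subset_range _ _))
  exact ((Set.finite_range (MonoidHom.mulSingle F s)).subset hle).to_subtype

theorem mem_wordBall_of_eval_eq_vertexHom {l : List (Option (Klein × (P × P)))} {s : ℕ} {a : F s}
    (h : (ofPair φ ψ).eval l = vertexHom F s a) :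
    a ∈ wordBall (range (φ s) ∪ range (ψ s)) l.length := by
  obtain ⟨-, m, hm, hmul⟩ := (ofPair φ ψ).eval_apply_wordBall l (length_offVertex s) 1
  have hma : m = Pi.mulSingle s a := by
    rw [← mul_one m, ← hmul, h]
    simp [vertexHom]
  have hmap := map_mem_wordBall (L := 1) (T := range (φ s) ∪ range (ψ s)) (Pi.evalMonoidHom F s)
    (fun x hx => ?_) hm
  · simpa [hma] using hmap
  · obtain ⟨y, hy, rfl⟩ := levelGens_ofPair φ ψ s hx
    simpa using subset_wordBall_one _ hy

end
end Decoration

/-! ### Left multiplication on one coordinate as a commutator -/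

section TwistedShift

variable {G : Type u} [Group G] {N : ℕ}

/-- The shift of coordinates on `Fin (N + 2) → G`, in which the coordinate `x 0` pushed out at one
end is multiplied into the last coordinate, so as to make the shift invertible. -/
def twistedShift (G : Type u) [Group G] (N : ℕ) : Perm (Fin (N + 2) → G) where
  toFun x := Fin.snoc (α := fun _ => G) (fun j => x j.succ) (x (Fin.last (N + 1)) * x 0)
  invFun x := Fin.cons (α := fun _ => G) ((x (Fin.last N).castSucc)⁻¹ * x (Fin.last (N + 1)))
    fun j => x j.castSucc
  left_inv x := funext <| Fin.cases
    (by beta_reduce; rw [Fin.cons_zero, Fin.snoc_castSucc, Fin.snoc_last, Fin.succ_last,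
      inv_mul_cancel_left])
    fun j => by beta_reduce; rw [Fin.cons_succ, Fin.snoc_castSucc]
  right_inv x := funext <| Fin.lastCases
    (by beta_reduce; rw [Fin.snoc_last, Fin.cons_zero, ← Fin.succ_last, Fin.cons_succ,
      mul_inv_cancel_left])
    fun j => by beta_reduce; rw [Fin.snoc_castSucc, Fin.cons_succ]

theorem twistedShift_apply_castSucc (x : Fin (N + 2) → G) (j : Fin (N + 1)) :
    twistedShift G N x j.castSucc = x j.succ :=
  Fin.snoc_castSucc (α := fun _ => G) (x (Fin.last (N + 1)) * x 0) (fun j => x j.succ) j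

theorem twistedShift_apply_last (x : Fin (N + 2) → G) :
    twistedShift G N x (Fin.last (N + 1)) = x (Fin.last (N + 1)) * x 0 :=
  Fin.snoc_last (α := fun _ => G) (x (Fin.last (N + 1)) * x 0) fun j => x j.succ

theorem twistedShift_inv_apply_succ (x : Fin (N + 2) → G) (j : Fin (N + 1)) :
    (twistedShift G N)⁻¹ x j.succ = x j.castSucc :=
  rfl

/-- Left multiplication of `Fin (N + 2) → G` by an element of the group. -/
abbrev leftMul (G : Type u) [Group G] (N : ℕ) :
    (Fin (N + 2) → G) →* Perm (Fin (N + 2) → G) :=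
  MulAction.toPermHom (Fin (N + 2) → G) (Fin (N + 2) → G)

/-- The function equal to `a` to the right of `i₀` and to `1` elsewhere. -/
def stepAfter (i₀ : Fin (N + 2)) (a : G) : Fin (N + 2) → G :=
  fun i => if i₀ < i then a else 1

theorem commutator_twistedShift_leftMul {i₀ : Fin (N + 2)} (hi₀ : i₀ < Fin.last (N + 1)) (a : G) :
    ⁅twistedShift G N, leftMul G N (stepAfter i₀ a)⁆ = leftMul G N (Pi.mulSingle i₀ a) := by
  rw [commutatorElement_def, mul_inv_eq_iff_eq_mul, mul_inv_eq_iff_eq_mul]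
  ext x i
  simp only [Perm.mul_apply, MulAction.toPermHom_apply, MulAction.toPerm_apply, smul_eq_mul,
    Pi.mul_apply]
  cases i using Fin.lastCases with
  | last =>
    simp [twistedShift_apply_last, stepAfter, hi₀, hi₀.ne', Pi.mulSingle_eq_of_ne, mul_assoc]
  | cast j =>
    have hstep : stepAfter i₀ a j.succ =
        (Pi.mulSingle i₀ a : Fin (N + 2) → G) j.castSucc * stepAfter i₀ a j.castSucc := by
      simp only [stepAfter, Pi.mulSingle_apply, Fin.lt_def, Fin.ext_iff, Fin.val_succ,
        Fin.val_castSucc]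
      grind
    rw [twistedShift_apply_castSucc, twistedShift_apply_castSucc, Pi.mul_apply, hstep, mul_assoc]

/-- Every coordinate of `x` that is at distance at least `n` from both ends can be found, up to a
left factor in `wordBall S n`, among the coordinates of `σ x` at distance at most `n` from it. -/
def TracksCoords (S : Set G) (n : ℕ) (σ : Perm (Fin (N + 2) → G)) : Prop :=
  ∀ p : Fin (N + 2), n ≤ p.1 → p.1 + n ≤ N + 1 →
    ∃ q : Fin (N + 2), q.1 ≤ p.1 + n ∧ p.1 ≤ q.1 + n ∧ ∃ a ∈ wordBall S n, ∀ x, σ x q = a * x p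

namespace TracksCoords

variable {S : Set G} {σ τ : Perm (Fin (N + 2) → G)} {m n : ℕ}

theorem one (S : Set G) (n : ℕ) : TracksCoords S n (1 : Perm (Fin (N + 2) → G)) := fun p _ _ =>
  ⟨p, by omega, by omega, 1, one_mem_wordBall S n, by simp⟩

theorem mul (hσ : TracksCoords S m σ) (hτ : TracksCoords S n τ) :
    TracksCoords S (m + n) (σ * τ) := by
  intro p hp hpN
  obtain ⟨q, hqp, hpq, a, ha, hτx⟩ := hτ p (by omega) (by omega)
  obtain ⟨r, hrq, hqr, b, hb, hσx⟩ := hσ q (by omega) (by omega)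
  refine ⟨r, by omega, by omega, b * a, mul_mem_wordBall hb ha, fun x => ?_⟩
  rw [Perm.mul_apply, hσx, hτx, mul_assoc]

theorem twistedShift (S : Set G) : TracksCoords S 1 (twistedShift G N) := by
  intro p hp _
  cases p using Fin.cases with
  | zero => simp at hp
  | succ j =>
    exact ⟨j.castSucc, by simp; omega, by simp, 1, one_mem_wordBall S 1, fun x => by
      rw [twistedShift_apply_castSucc, one_mul]⟩

theorem twistedShift_inv (S : Set G) : TracksCoords S 1 (_root_.twistedShift G N)⁻¹ := by
  intro p _ hpN
  cases p using Fin.lastCases with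
  | last => simp at hpN
  | cast j =>
    exact ⟨j.succ, by simp, by simp; omega, 1, one_mem_wordBall S 1, fun x => by
      rw [twistedShift_inv_apply_succ, one_mul]⟩

theorem leftMul {y : Fin (N + 2) → G} (hy : ∀ i, y i ∈ wordBall S n) :
    TracksCoords S n (leftMul G N y) := fun p _ _ =>
  ⟨p, by omega, by omega, y p, hy p, fun _ => rfl⟩

/- Applied to a tuple whose only non-trivial coordinates lie off `i₀`, the tracked coordinate reads
`a` both at `i₀` and elsewhere. -/
theorem mem_wordBall {i₀ : Fin (N + 2)} {a : G} (hn : n ≤ i₀.1) (hnN : i₀.1 + n ≤ N + 1)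
    (h : TracksCoords S n (_root_.leftMul G N (Pi.mulSingle i₀ a))) : a ∈ wordBall S n := by
  obtain ⟨q, -, -, b, hb, hx⟩ := h i₀ hn hnN
  suffices hab : a = b from hab ▸ hb
  have hq := hx fun i => if i = i₀ then 1 else a
  by_cases hqi : q = i₀ <;> simpa [hqi] using hq

end TracksCoords

end TwistedShift

/-! ### Generating a finite group by two abelian subgroups of exponent three -/

section Translation

variable {A : Type u} {Ω : Type v} [AddCommGroup A]

/-- The action of `A` on `A × Ω` by translations of the first factor. -/
def translation (A : Type u) (Ω : Type v) [AddCommGroup A] :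
    Multiplicative A →* Perm (A × Ω) where
  toFun j := Equiv.prodShear (Equiv.addRight j.toAdd) fun _ => Equiv.refl Ω
  map_one' := by ext1 ⟨i, x⟩; simp
  map_mul' j k := by ext1 ⟨i, x⟩; simp [add_comm, add_left_comm]

theorem translation_apply (j : Multiplicative A) (i : A) (x : Ω) :
    translation A Ω j (i, x) = (i + j.toAdd, x) :=
  rfl

/-- The conjugate of the translations by the fiberwise permutation `y`. -/
def twistedTranslation (y : A → Perm Ω) : Multiplicative A →* Perm (A × Ω) :=
  (MulAut.conj (fiberwise A (Perm Ω) Ω y)).toMonoidHom.comp (translation A Ω)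

theorem twistedTranslation_apply (y : A → Perm Ω) (j : Multiplicative A) (i : A) (x : Ω) :
    twistedTranslation y j (i, x) = (i + j.toAdd, (y (i + j.toAdd) * (y i)⁻¹) x) := by
  simp only [twistedTranslation, MonoidHom.comp_apply, MulEquiv.toMonoidHom_eq_coe,
    MonoidHom.coe_coe, MulAut.conj_apply, ← map_inv, Perm.mul_apply, fiberwise_apply,
    translation_apply]
  rfl

theorem twistedTranslation_mul_inv (y : A → Perm Ω) (j : Multiplicative A) :
    twistedTranslation y j * (translation A Ω j)⁻¹ =
      fiberwise A (Perm Ω) Ω fun i => y i * (y (i - j.toAdd))⁻¹ := by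
  rw [mul_inv_eq_iff_eq_mul]
  ext1 ⟨i, x⟩
  rw [Perm.mul_apply, twistedTranslation_apply, translation_apply, fiberwise_apply]
  simp

end Translation

section NegBasis

variable {κ : Type u} [DecidableEq κ] {H : Type v} [Group H]

/-- The function equal to `(z k)⁻¹` at the opposite of the `k`-th basis vector, and to `1` at all
other places. -/
noncomputable def negBasisInv (z : κ → H) : (κ → ZMod 3) → H :=
  Function.extend (fun k => -Pi.single k 1) (fun k => (z k)⁻¹) 1

theorem single_one_injective : Function.Injective fun k : κ => (Pi.single k 1 : κ → ZMod 3) :=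
  fun k l h => by simpa [Pi.single_apply] using congrFun h k

theorem single_one_add_single_one_ne (k l m : κ) :
    (Pi.single k 1 + Pi.single l 1 : κ → ZMod 3) ≠ Pi.single m 1 := by
  intro h
  have hk := congrFun h k
  have hl := congrFun h l
  simp only [Pi.add_apply, Pi.single_apply] at hk hl
  split_ifs at hk hl <;> subst_vars <;> contradiction

theorem negBasisInv_neg_single (z : κ → H) (k : κ) :
    negBasisInv z (-Pi.single k 1) = (z k)⁻¹ :=
  (neg_injective.comp single_one_injective).extend_apply _ _ k

theorem negBasisInv_of_ne (z : κ → H) {i : κ → ZMod 3} (hi : ∀ k, i ≠ -Pi.single k 1) :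
    negBasisInv z i = 1 :=
  Function.extend_apply' _ _ i fun ⟨k, hk⟩ => hi k hk.symm

theorem negBasisInv_zero (z : κ → H) : negBasisInv z 0 = 1 :=
  negBasisInv_of_ne z fun k h => by simpa using congrFun h k

theorem eq_zero_of_sub_single_eq_neg_single {k l m n : κ} (hkl : k ≠ l) {i : κ → ZMod 3}
    (hk : i - Pi.single k 1 = -Pi.single m 1) (hl : i - Pi.single l 1 = -Pi.single n 1) :
    i = 0 := by
  have hkm : k = m := by
    by_contra hkm
    have h : (1 : ZMod 3) = -if k = n then 1 else 0 := by
      simpa [Pi.single_apply, hkm, hkl] using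
        congrFun ((sub_eq_iff_eq_add.1 hk).symm.trans (sub_eq_iff_eq_add.1 hl)) k
    split_ifs at h <;> contradiction
  rw [sub_eq_iff_eq_add.1 hk, hkm, neg_add_cancel]

theorem commutator_negBasisInv [DecidableEq (κ → ZMod 3)] (z : κ → H) {k l : κ} (hkl : k ≠ l)
    (i : κ → ZMod 3) :
    ⁅negBasisInv z i * (negBasisInv z (i - Pi.single k 1))⁻¹,
      negBasisInv z i * (negBasisInv z (i - Pi.single l 1))⁻¹⁆ =
      (Pi.mulSingle 0 ⁅z k, z l⁆ : (κ → ZMod 3) → H) i := by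
  rcases eq_or_ne i 0 with rfl | hi
  · simp [negBasisInv_zero, negBasisInv_neg_single]
  rw [Pi.mulSingle_eq_of_ne hi]
  by_cases hneg : ∃ m, i = -Pi.single m 1
  · obtain ⟨m, rfl⟩ := hneg
    have hone (l : κ) : negBasisInv z (-Pi.single m 1 - Pi.single l 1) = 1 :=
      negBasisInv_of_ne z fun n h => single_one_add_single_one_ne m l n <| by
        rw [← neg_inj, ← h, neg_add']
    rw [hone, hone, commutatorElement_self]
  rw [not_exists] at hneg
  rw [negBasisInv_of_ne z hneg, one_mul, one_mul]
  by_cases hk : ∀ m, i - Pi.single k 1 ≠ -Pi.single m 1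
  · rw [negBasisInv_of_ne z hk, inv_one, commutatorElement_one_left]
  by_cases hl : ∀ n, i - Pi.single l 1 ≠ -Pi.single n 1
  · rw [negBasisInv_of_ne z hl, inv_one, commutatorElement_one_right]
  push Not at hk hl
  exact absurd (eq_zero_of_sub_single_eq_neg_single hkl hk.choose_spec hl.choose_spec) hi

end NegBasis

section TracksFibers

variable {G : Type u} [Group G] {N : ℕ} {A : Type v}

/-- The permutation `σ` maps fibers over `A` to fibers over `A`, by maps tracking coordinates. -/
def TracksFibers (S : Set G) (n : ℕ) (σ : Perm (A × (Fin (N + 2) → G))) : Prop :=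
  ∀ i, ∃ j τ, TracksCoords S n τ ∧ ∀ x, σ (i, x) = (j, τ x)

namespace TracksFibers

variable {S : Set G} {σ τ : Perm (A × (Fin (N + 2) → G))} {m n : ℕ}

theorem one (S : Set G) (n : ℕ) : TracksFibers S n (1 : Perm (A × (Fin (N + 2) → G))) := fun i =>
  ⟨i, 1, .one S n, fun _ => rfl⟩

theorem mul (hσ : TracksFibers S m σ) (hτ : TracksFibers S n τ) :
    TracksFibers S (m + n) (σ * τ) := by
  intro i
  obtain ⟨j, τ', hτ', hτx⟩ := hτ i
  obtain ⟨k, σ', hσ', hσx⟩ := hσ j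
  exact ⟨k, σ' * τ', hσ'.mul hτ', fun x => by rw [Perm.mul_apply, hτx, hσx, Perm.mul_apply]⟩

theorem of_mem_wordBall {T : Set (Perm (A × (Fin (N + 2) → G)))}
    (hT : ∀ ρ, ρ ∈ T ∨ ρ⁻¹ ∈ T → TracksFibers S m ρ) (hσ : σ ∈ wordBall T n) :
    TracksFibers S (m * n) σ := by
  obtain ⟨l, hl, hn, rfl⟩ := hσ
  induction l generalizing n with
  | nil => exact one S _
  | cons ρ l ih =>
    obtain _ | n := n
    · simp at hn
    rw [List.prod_cons, mul_add_one, add_comm]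
    exact (hT ρ (hl ρ List.mem_cons_self)).mul
      (ih (fun ρ hρ => hl ρ (List.mem_cons_of_mem _ hρ)) (by simpa using hn))

theorem tracksCoords_of_fiberwise {y : A → Perm (Fin (N + 2) → G)}
    (h : TracksFibers S n (fiberwise A (Perm (Fin (N + 2) → G)) (Fin (N + 2) → G) y)) (i : A) :
    TracksCoords S n (y i) := by
  obtain ⟨j, τ, hτ, hx⟩ := h i
  rwa [show y i = τ from Equiv.ext fun x => (Prod.ext_iff.1 (hx x)).2]

variable [AddCommGroup A]

theorem translation (S : Set G) (n : ℕ) (j : Multiplicative A) :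
    TracksFibers S n (translation A (Fin (N + 2) → G) j) := fun i =>
  ⟨_, 1, .one S n, translation_apply j i⟩

theorem twistedTranslation {y : A → Perm (Fin (N + 2) → G)} (hy : ∀ i, TracksCoords S m (y i))
    (hyinv : ∀ i, TracksCoords S n (y i)⁻¹) (j : Multiplicative A) :
    TracksFibers S (m + n) (twistedTranslation y j) := fun i =>
  ⟨_, _, (hy _).mul (hyinv _), twistedTranslation_apply y j i⟩

end TracksFibers

end TracksFibers

section CommutatorEmbedding

variable {G : Type u} [Group G] {ι : Type v} {N : ℕ} (i₀ : Fin (N + 2))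

/-- Permutations whose commutators `⁅z none, z (some k)⁆` are the left multiplications by `g k` on
the coordinate `i₀`. -/
def shiftOrStep (g : ι → G) : Option ι → Perm (Fin (N + 2) → G)
  | none => twistedShift G N
  | some k => leftMul G N (stepAfter i₀ (g k))

/-- Left multiplication on the coordinate `i₀` in the fiber over `0`. -/
def coordHom (A : Type w) [Zero A] [DecidableEq A] : G →* Perm (A × (Fin (N + 2) → G)) :=
  (fiberwise A (Perm (Fin (N + 2) → G)) (Fin (N + 2) → G)).comp
    ((MonoidHom.mulSingle (fun _ => Perm (Fin (N + 2) → G)) 0).comp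
      ((leftMul G N).comp (MonoidHom.mulSingle (fun _ => G) i₀)))

theorem coordHom_injective (A : Type w) [Zero A] [DecidableEq A] :
    Function.Injective (coordHom (G := G) i₀ A) :=
  fiberwise_injective.comp <| (Pi.mulSingle_injective _).comp <|
    MulAction.toPerm_injective.comp (Pi.mulSingle_injective (M := fun _ => G) i₀)

theorem tracksCoords_shiftOrStep (g : ι → G) (k : Option ι) :
    TracksCoords (range g) 1 (shiftOrStep i₀ g k) ∧
      TracksCoords (range g) 1 (shiftOrStep i₀ g k)⁻¹ := by
  cases k with
  | none => exact ⟨.twistedShift _, .twistedShift_inv _⟩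
  | some k =>
    have hstep (i : Fin (N + 2)) : stepAfter i₀ (g k) i ∈ wordBall (range g) 1 := by
      unfold stepAfter
      split_ifs
      exacts [subset_wordBall_one _ ⟨k, rfl⟩, one_mem_wordBall _ 1]
    refine ⟨.leftMul hstep, ?_⟩
    rw [shiftOrStep, ← map_inv]
    exact .leftMul fun i => inv_mem_wordBall (hstep i)

variable [DecidableEq ι]

/-- The translations by `Option ι → ZMod 3`, twisted by the permutations `shiftOrStep i₀ g`. -/
noncomputable def stepTranslation (g : ι → G) :
    Multiplicative (Option ι → ZMod 3) →* Perm ((Option ι → ZMod 3) × (Fin (N + 2) → G)) :=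
  twistedTranslation (negBasisInv (shiftOrStep i₀ g))

variable {i₀}

theorem commutator_stepTranslation [DecidableEq (Option ι → ZMod 3)]
    (hi₀ : i₀ < Fin.last (N + 1)) (g : ι → G) (k : ι) :
    ⁅stepTranslation i₀ g (.ofAdd (Pi.single none 1)) *
        (translation _ _ (.ofAdd (Pi.single none 1)))⁻¹,
      stepTranslation i₀ g (.ofAdd (Pi.single (some k) 1)) *
        (translation _ _ (.ofAdd (Pi.single (some k) 1)))⁻¹⁆ =
      coordHom i₀ (Option ι → ZMod 3) (g k) := by
  rw [stepTranslation, twistedTranslation_mul_inv, twistedTranslation_mul_inv,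
    ← map_commutatorElement]
  refine congrArg _ (funext fun i => ?_)
  refine (commutator_negBasisInv (shiftOrStep i₀ g) (Option.some_ne_none k).symm i).trans ?_
  rw [shiftOrStep, shiftOrStep, commutator_twistedShift_leftMul hi₀]
  rfl

theorem tracksFibers_stepTranslation (g : ι → G) (j : Multiplicative (Option ι → ZMod 3)) :
    TracksFibers (range g) 2 (stepTranslation i₀ g j) := by
  have hnegBasis (i : Option ι → ZMod 3) :
      TracksCoords (range g) 1 (negBasisInv (shiftOrStep i₀ g) i) ∧
        TracksCoords (range g) 1 (negBasisInv (shiftOrStep i₀ g) i)⁻¹ := by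
    by_cases hi : ∃ k, i = -Pi.single k 1
    · obtain ⟨k, rfl⟩ := hi
      rw [negBasisInv_neg_single, inv_inv]
      exact (tracksCoords_shiftOrStep i₀ g k).symm
    · rw [negBasisInv_of_ne _ (not_exists.1 hi), inv_one]
      exact ⟨.one _ 1, .one _ 1⟩
  exact .twistedTranslation (fun i => (hnegBasis i).1) (fun i => (hnegBasis i).2) j

theorem mem_wordBall_of_coordHom_mem [DecidableEq (Option ι → ZMod 3)] {g : ι → G} {a : G}
    {n : ℕ} (hn : 2 * n ≤ i₀.1) (hnN : i₀.1 + 2 * n ≤ N + 1)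
    (ha : coordHom i₀ (Option ι → ZMod 3) a ∈
      wordBall (range (translation (Option ι → ZMod 3) _) ∪ range (stepTranslation i₀ g)) n) :
    a ∈ wordBall (range g) (2 * n) := by
  have htracks : TracksFibers (range g) (2 * n) (coordHom i₀ (Option ι → ZMod 3) a) := by
    refine .of_mem_wordBall (fun ρ hρ => ?_) ha
    rw [← MonoidHom.coe_range, ← MonoidHom.coe_range, Set.mem_union, Set.mem_union,
      SetLike.mem_coe, SetLike.mem_coe, SetLike.mem_coe, SetLike.mem_coe, inv_mem_iff, inv_mem_iff,
      or_self] at hρ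
    obtain ⟨j, rfl⟩ | ⟨j, rfl⟩ := hρ
    exacts [.translation _ 2 j, tracksFibers_stepTranslation g j]
  have hcoords := htracks.tracksCoords_of_fiberwise 0
  exact TracksCoords.mem_wordBall hn hnN (by simpa using hcoords)

theorem exists_commutator_embedding [Finite G] [Finite ι] (g : ι → G) :
    ∃ (F : Type max u v) (_ : Group F) (_ : Finite F)
      (φ ψ : Multiplicative (Option ι → ZMod 3) →* F) (f : G →* F),
      Function.Injective f ∧
      (∀ k, ⁅ψ (.ofAdd (Pi.single none 1)) * (φ (.ofAdd (Pi.single none 1)))⁻¹,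
        ψ (.ofAdd (Pi.single (some k) 1)) * (φ (.ofAdd (Pi.single (some k) 1)))⁻¹⁆ = f (g k)) ∧
      ∀ x n, f x ∈ wordBall (range φ ∪ range ψ) n → wordNorm (range g) x ≤ 2 * n := by
  classical
  obtain ⟨D, hD⟩ : ∃ D, ∀ x, wordNorm (range g) x ≤ D :=
    (Set.finite_range (wordNorm (range g))).bddAbove.imp fun D hD x => hD ⟨x, rfl⟩
  -- `D` coordinates on either side of `i₀` suffice to track all words shorter than the diameter.
  let i₀ : Fin (2 * D + 2) := ⟨D, by omega⟩
  refine ⟨Perm ((Option ι → ZMod 3) × (Fin (2 * D + 2) → G)), inferInstance, inferInstance,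
    translation _ _, stepTranslation i₀ g, coordHom i₀ (Option ι → ZMod 3), coordHom_injective i₀ _,
    commutator_stepTranslation (by simp [Fin.lt_def, i₀]; omega) g, fun x n hx => ?_⟩
  rcases le_total (2 * n) D with hn | hn
  · exact wordNorm_le_of_mem_wordBall (mem_wordBall_of_coordHom_mem hn (by simp [i₀]; omega) hx)
  · exact (hD x).trans hn

end CommutatorEmbedding

/-! ### The embedding -/

namespace Decoration

variable {P : Type u} {F : ℕ → Type v} {G : Type w} [CommGroup P] [∀ s, Group (F s)] [Group G]
  {φ ψ : ∀ s, P →* F s} {s : ℕ} {f : G →* F s} {S : Set G}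

/-- Every element of `S` is sent by `f` to the value of a commutator word. -/
def MapsToCommutators (φ ψ : ∀ s, P →* F s) (f : G →* F s) (S : Set G) : Prop :=
  ∀ a ∈ S, ∃ p q, ⁅ψ s p * (φ s p)⁻¹, ψ s q * (φ s q)⁻¹⁆ = f a

theorem vertexHom_mem_group (hf : MapsToCommutators φ ψ f S) (hS : Subgroup.closure S = ⊤) (x : G) :
    vertexHom F s (f x) ∈ (ofPair φ ψ).group := by
  suffices h : Subgroup.closure S ≤ (ofPair φ ψ).group.comap ((vertexHom F s).comp f) from
    h (hS ▸ Subgroup.mem_top x)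
  refine (Subgroup.closure_le _).2 fun a ha => ?_
  obtain ⟨p, q, hpq⟩ := hf a ha
  rw [SetLike.mem_coe, Subgroup.mem_comap, MonoidHom.comp_apply, ← hpq, ← eval_commutatorWord]
  exact eval_mem_group _ _

variable {Ψ : G →* (ofPair φ ψ).group}

theorem wordNorm_letter_le (hΨ : ∀ x, (Ψ x : Perm _) = vertexHom F s (f x))
    (hf : MapsToCommutators φ ψ f S) (hS : Subgroup.closure S = ⊤) (x : G) :
    wordNorm (range (ofPair φ ψ).letter) (Ψ x) ≤ 2 ^ (s + 4) * wordNorm S x := by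
  refine wordNorm_map_le Ψ hS (fun a ha => ?_) x
  obtain ⟨p, q, hpq⟩ := hf a ha
  refine (ofPair φ ψ).mem_wordBall_range_letter.2
    ⟨commutatorWord s p q, (length_commutatorWord s p q).le, ?_⟩
  rw [eval_commutatorWord, hpq, hΨ]

theorem mem_wordBall_wordNorm_letter (hΨ : ∀ x, (Ψ x : Perm _) = vertexHom F s (f x)) (x : G) :
    f x ∈ wordBall (range (φ s) ∪ range (ψ s)) (wordNorm (range (ofPair φ ψ).letter) (Ψ x)) := by
  obtain ⟨l, hl, hlx⟩ := (ofPair φ ψ).mem_wordBall_range_letter.1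
    (mem_wordBall_wordNorm (closure_range_letter _) (Ψ x))
  exact wordBall_mono hl (mem_wordBall_of_eval_eq_vertexHom φ ψ (hlx.trans (hΨ x)))

end Decoration

theorem imbed_sequence_in_subexp_group_general {ι : Type v} [Finite ι] (G : ℕ → Type u)
    [∀ s, Group (G s)] [∀ s, Finite (G s)] (g : ∀ s, ι → G s)
    (hg : ∀ s, Subgroup.closure (range (g s)) = ⊤) :
    ∃ (W : Type max u v) (_ : Group W) (T : Finset W),
      Subgroup.closure (T : Set W) = ⊤ ∧ SubexpGrowth (T : Set W) ∧
      ∀ s, ∃ Ψ : G s →* W, Function.Injective Ψ ∧ ∀ x y,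
        (wordDist (range (g s)) x y : ℝ) / 2 ≤ wordDist (T : Set W) (Ψ x) (Ψ y) ∧
        (wordDist (T : Set W) (Ψ x) (Ψ y) : ℝ) ≤ 2 ^ (s + 4) * wordDist (range (g s)) x y := by
  classical
  choose F _ _ φ ψ f hinj hcomm hnorm using fun s => exists_commutator_embedding (g s)
  let D := Decoration.ofPair φ ψ
  have hf (s : ℕ) : Decoration.MapsToCommutators φ ψ (f s) (range (g s)) := by
    rintro _ ⟨k, rfl⟩
    exact ⟨_, _, hcomm s k⟩
  refine ⟨D.group, inferInstance, (Set.finite_range D.letter).toFinset, ?_, ?_, fun s => ?_⟩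
  · rw [Set.Finite.coe_toFinset, D.closure_range_letter]
  · rw [Set.Finite.coe_toFinset]
    exact D.subexpGrowth_letter fun s => Decoration.finite_levelGroup_ofPair φ ψ s
  let Ψ : G s →* D.group := ((Decoration.vertexHom F s).comp (f s)).codRestrict D.group
    (Decoration.vertexHom_mem_group (hf s) (hg s))
  have hΨ (x : G s) : (Ψ x : Perm _) = Decoration.vertexHom F s (f s x) := rfl
  refine ⟨Ψ, .of_comp (f := Subtype.val) <|
    (Decoration.vertexHom_injective s).comp (hinj s), fun x y => ?_⟩
  rw [Set.Finite.coe_toFinset, wordDist, wordDist, ← map_inv, ← map_mul]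
  constructor
  · have hle := hnorm s _ _ (Decoration.mem_wordBall_wordNorm_letter hΨ (x * y⁻¹))
    rw [div_le_iff₀' two_pos]
    exact_mod_cast hle
  · exact_mod_cast Decoration.wordNorm_letter_le hΨ (hf s) (hg s) (x * y⁻¹)

theorem MarkedGroup.exists_range_eq_gens {d : ℕ} (M : MarkedGroup d) :
    ∃ g : Fin d → M.carrier, range g = M.gens :=
  ⟨Subtype.val ∘ (M.gens.equivFinOfCardEq M.card_gens).symm, by
    rw [EquivLike.range_comp, Subtype.range_coe]⟩

/-- Proposition (imbedding a sequence of `d`-generated finite groups in groups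
of subexponential growth, with uniformly controlled distortion): there are
assignments of constants `K, L` — depending only on `s`, on `S ∩ [0, s)` and on
the groups `G j` for `j ∈ S`, `j < s`, but not on `G j` for `j ≥ s` — such
that for every sequence `(G i)` of `d`-generated finite groups and every
`S ⊆ ℕ` there is a finitely generated group `W_S` of subexponential growth
admitting, for each `s ∈ S`, a `(K, L)`-bi-Lipschitz injective homomorphism
`Ψ_s : G_s → W_S` for the word metrics. -/
theorem imbed_sequence_in_subexp_group (d : ℕ) :
    ∃ K L : Set ℕ → (ℕ → MarkedGroup d) → ℕ → ℝ,
      -- the constants depend only on `s`, `S ∩ [0, s)` and the groups `G j`,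
      -- `j ∈ S`, `j < s`:
      (∀ (S S' : Set ℕ) (Gs Gs' : ℕ → MarkedGroup d) (s : ℕ),
        (∀ j < s, j ∈ S ↔ j ∈ S') → (∀ j < s, j ∈ S → Gs j = Gs' j) →
        K S Gs s = K S' Gs' s ∧ L S Gs s = L S' Gs' s) ∧
      ∀ (Gs : ℕ → MarkedGroup d) (S : Set ℕ),
        ∃ (W : Type) (_ : Group W) (T : Finset W),
          Subgroup.closure (T : Set W) = ⊤ ∧
          SubexpGrowth (T : Set W) ∧
          ∀ s ∈ S, 1 ≤ K S Gs s ∧ 1 ≤ L S Gs s ∧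
            ∃ Ψ : (Gs s).carrier →* W, Function.Injective Ψ ∧
              ∀ x y : (Gs s).carrier,
                (wordDist ((Gs s).gens : Set (Gs s).carrier) x y : ℝ) / K S Gs s ≤
                    (wordDist (T : Set W) (Ψ x) (Ψ y) : ℝ) ∧
                (wordDist (T : Set W) (Ψ x) (Ψ y) : ℝ) ≤
                    L S Gs s * (wordDist ((Gs s).gens : Set (Gs s).carrier) x y : ℝ) := by
  refine ⟨fun _ _ _ => 2, fun _ _ s => 2 ^ (s + 4), fun _ _ _ _ _ _ _ => ⟨rfl, rfl⟩,
    fun Gs S => ?_⟩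
  choose g hg using fun s => (Gs s).exists_range_eq_gens
  obtain ⟨W, _, T, hT, hgrowth, hΨ⟩ := imbed_sequence_in_subexp_group_general
    (fun s => (Gs s).carrier) g fun s => (hg s).symm ▸ (Gs s).isGen
  simp only [hg] at hΨ
  exact ⟨W, inferInstance, T, hT, hgrowth, fun s _ =>
    ⟨one_le_two, one_le_pow₀ one_le_two, hΨ s⟩⟩
end

section
/- Let H be a perfect group (H = [H,H]) generated by a finite set T of cardinality d. Then there exists a constant J ≥ 1 such that for every surjective group homomorphism π: H → H', setting T' = π(T): the group H' is perfect, it is generated by the d-element set T', and every g ∈ H' satisfies ‖g‖_{T'} ≤ ‖g‖_perfect ≤ J·‖g‖_{T'}, where ‖·‖_perfect is the perfect norm on H' = [H',H'] with respect to T'. In particular the identity map (H', d_perfect) → (H', d_{T'}) is (J⁻¹,1)-bi-Lipschitz, with J independent of the quotient. -/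
/-- The perfect norm of `h` with respect to the generating set `T`: the least
length of a balanced word (i.e. a word lying in the commutator subgroup of the
free group `F_T`) representing `h`. -/
noncomputable def perfectNorm {H : Type*} [Group H] (T : Set H) (h : H) : ℕ :=
  sInf {n | ∃ L : List (T × Bool),
    FreeGroup.mk L ∈ commutator (FreeGroup T) ∧
    L.length = n ∧
    FreeGroup.lift (fun t : T => (t : H)) (FreeGroup.mk L) = h}

/-!
Let `J` bound the perfect norms of the finitely many elements of `T`. Applying `π` letter by letter
turns a balanced word representing `t` into a balanced word of the same length representing `π t`,
so the same `J` bounds the perfect norm on `π(T)` in every quotient. Substituting such words for the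
letters of a shortest word over `π(T)` yields a balanced word at most `J` times as long.
-/

lemma map_commutator_le {G H : Type*} [Group G] [Group H] (f : G →* H) :
    (commutator G).map f ≤ commutator H :=
  (map_commutator_eq G f).trans_le (Subgroup.commutator_mono le_top le_top)

lemma freeGroup_norm_map_le {α β : Type*} [DecidableEq α] [DecidableEq β]
    (f : α → β) (w : FreeGroup α) : (FreeGroup.map f w).norm ≤ w.norm :=
  calc (FreeGroup.map f w).norm
    _ = (FreeGroup.mk (w.toWord.map fun x => (f x.1, x.2))).norm := by
      rw [← FreeGroup.map.mk, FreeGroup.mk_toWord]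
    _ ≤ (w.toWord.map fun x => (f x.1, x.2)).length := FreeGroup.norm_mk_le
    _ = w.norm := List.length_map _

section EvalWord

open Subgroup

variable {G H : Type*} [Group G] [Group H]

/-- The evaluation homomorphism from the free group on a subset `T` of a group to that group,
sending a word in `T` to the element it represents. -/
def evalWord (T : Set H) : FreeGroup T →* H :=
  FreeGroup.lift fun t : T => (t : H)

lemma map_evalWord_commutator (T : Set H) :
    (commutator (FreeGroup T)).map (evalWord T) = ⁅closure T, closure T⁆ := by
  rw [map_commutator_eq, evalWord, FreeGroup.range_lift_eq_closure, Subtype.range_coe]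

lemma evalWord_image_map_imageFactorization (f : G →* H) (T : Set G) (w : FreeGroup T) :
    evalWord (f '' T) (FreeGroup.map (T.imageFactorization f) w) = f (evalWord T w) := by
  have hcomp : (evalWord (f '' T)).comp (FreeGroup.map (T.imageFactorization f)) =
      f.comp (evalWord T) := by
    ext t
    simp [evalWord, Set.imageFactorization]
  exact DFunLike.congr_fun hcomp w

end EvalWord

section WordNorm

open Subgroup

variable {G : Type*} [Group G] {S : Set G} {g : G}

lemma exists_list_length_eq_wordNorm (hg : g ∈ closure S) :
    ∃ l : List G, (∀ x ∈ l, x ∈ S ∨ x⁻¹ ∈ S) ∧ l.length = wordNorm S g ∧ l.prod = g := by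
  rw [← mem_toSubmonoid, closure_toSubmonoid] at hg
  obtain ⟨l, hl, hprod⟩ := Submonoid.exists_list_of_mem_closure hg
  exact Nat.sInf_mem
    (s := {n | ∃ l : List G, (∀ x ∈ l, x ∈ S ∨ x⁻¹ ∈ S) ∧ l.length = n ∧ l.prod = g})
    ⟨l.length, l, hl, rfl, hprod⟩

lemma wordNorm_evalWord_le_norm [DecidableEq S] (w : FreeGroup S) :
    wordNorm S (evalWord S w) ≤ w.norm := by
  refine Nat.sInf_le
    ⟨w.toWord.map fun x => cond x.2 (x.1 : G) (x.1 : G)⁻¹, ?_, List.length_map _, ?_⟩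
  · rw [List.forall_mem_map]
    rintro ⟨s, _ | _⟩ - <;> simp
  · conv_rhs => rw [← FreeGroup.mk_toWord (x := w), evalWord, FreeGroup.lift_mk]

end WordNorm

section PerfectNorm

open Subgroup

variable {G H : Type*} [Group G] [Group H] {T : Set H} {g h : H}

lemma perfectNorm_evalWord_le_norm [DecidableEq T] {w : FreeGroup T}
    (hw : w ∈ commutator (FreeGroup T)) : perfectNorm T (evalWord T w) ≤ w.norm := by
  refine Nat.sInf_le ⟨w.toWord, ?_, rfl, ?_⟩
  · rwa [FreeGroup.mk_toWord]
  · rw [FreeGroup.mk_toWord, evalWord]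

lemma exists_balanced_norm_eq_perfectNorm [DecidableEq T] (hh : h ∈ ⁅closure T, closure T⁆) :
    ∃ w ∈ commutator (FreeGroup T), evalWord T w = h ∧ w.norm = perfectNorm T h := by
  have hne : {n | ∃ L : List (T × Bool), FreeGroup.mk L ∈ commutator (FreeGroup T) ∧
      L.length = n ∧ FreeGroup.lift (fun t : T => (t : H)) (FreeGroup.mk L) = h}.Nonempty := by
    rw [← map_evalWord_commutator] at hh
    obtain ⟨w, hw, hwh⟩ := hh
    exact ⟨w.norm, w.toWord, by rwa [FreeGroup.mk_toWord], rfl, by rwa [FreeGroup.mk_toWord]⟩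
  obtain ⟨L, hL, hlength, rfl⟩ := Nat.sInf_mem hne
  exact ⟨FreeGroup.mk L, hL, rfl,
    (FreeGroup.norm_mk_le.trans_eq hlength).antisymm (perfectNorm_evalWord_le_norm hL)⟩

lemma wordNorm_le_perfectNorm (hh : h ∈ ⁅closure T, closure T⁆) :
    wordNorm T h ≤ perfectNorm T h := by
  classical
  obtain ⟨w, -, rfl, hnorm⟩ := exists_balanced_norm_eq_perfectNorm hh
  exact hnorm ▸ wordNorm_evalWord_le_norm w

lemma perfectNorm_one : perfectNorm T 1 = 0 := by
  classical
  simpa only [map_one, FreeGroup.norm_one, Nat.le_zero] using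
    perfectNorm_evalWord_le_norm (one_mem (commutator (FreeGroup T)))

lemma perfectNorm_mul_le (hg : g ∈ ⁅closure T, closure T⁆) (hh : h ∈ ⁅closure T, closure T⁆) :
    perfectNorm T (g * h) ≤ perfectNorm T g + perfectNorm T h := by
  classical
  obtain ⟨v, hv, rfl, hvnorm⟩ := exists_balanced_norm_eq_perfectNorm hg
  obtain ⟨w, hw, rfl, hwnorm⟩ := exists_balanced_norm_eq_perfectNorm hh
  rw [← map_mul, ← hvnorm, ← hwnorm]
  exact (perfectNorm_evalWord_le_norm (mul_mem hv hw)).trans (FreeGroup.norm_mul_le v w)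

lemma perfectNorm_inv_le (hh : h ∈ ⁅closure T, closure T⁆) :
    perfectNorm T h⁻¹ ≤ perfectNorm T h := by
  classical
  obtain ⟨w, hw, rfl, hnorm⟩ := exists_balanced_norm_eq_perfectNorm hh
  rw [← map_inv, ← hnorm, ← FreeGroup.norm_inv_eq]
  exact perfectNorm_evalWord_le_norm (inv_mem hw)

lemma perfectNorm_image_le (f : H →* G) (hh : h ∈ ⁅closure T, closure T⁆) :
    perfectNorm (f '' T) (f h) ≤ perfectNorm T h := by
  classical
  obtain ⟨w, hw, rfl, hnorm⟩ := exists_balanced_norm_eq_perfectNorm hh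
  rw [← evalWord_image_map_imageFactorization, ← hnorm]
  have hbalanced : FreeGroup.map (T.imageFactorization f) w ∈ commutator (FreeGroup (f '' T)) :=
    map_commutator_le _ (mem_map_of_mem _ hw)
  exact (perfectNorm_evalWord_le_norm hbalanced).trans (freeGroup_norm_map_le _ w)

lemma perfectNorm_list_prod_le {J : ℕ} (l : List H) (hl : ∀ x ∈ l, x ∈ ⁅closure T, closure T⁆)
    (hJ : ∀ x ∈ l, perfectNorm T x ≤ J) : perfectNorm T l.prod ≤ J * l.length := by
  induction l with
  | nil => simp [perfectNorm_one]
  | cons a l ih =>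
    rw [List.forall_mem_cons] at hl hJ
    calc perfectNorm T (a :: l).prod
      _ ≤ perfectNorm T a + perfectNorm T l.prod :=
        perfectNorm_mul_le hl.1 (list_prod_mem hl.2)
      _ ≤ J + J * l.length := add_le_add hJ.1 (ih hl.2 hJ.2)
      _ = J * (a :: l).length := by rw [List.length_cons]; ring

lemma mem_commutator_closure [Group.IsPerfect (closure T)] (hh : h ∈ T) :
    h ∈ ⁅closure T, closure T⁆ := by
  rw [commutator_eq_self]
  exact subset_closure hh

lemma perfectNorm_le_mul_wordNorm [Group.IsPerfect (closure T)] {J : ℕ}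
    (hJ : ∀ t ∈ T, perfectNorm T t ≤ J) (hg : g ∈ closure T) :
    perfectNorm T g ≤ J * wordNorm T g := by
  obtain ⟨l, hl, hlength, rfl⟩ := exists_list_length_eq_wordNorm hg
  rw [← hlength]
  refine perfectNorm_list_prod_le l (fun x hx => ?_) (fun x hx => ?_)
  · exact (hl x hx).elim mem_commutator_closure
      (fun hinv => inv_mem_iff.1 (mem_commutator_closure hinv))
  · rcases hl x hx with hmem | hinv
    · exact hJ x hmem
    · simpa only [inv_inv] using
        (perfectNorm_inv_le (mem_commutator_closure hinv)).trans (hJ _ hinv)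

lemma perfectNorm_image_le_mul_wordNorm [Group.IsPerfect (closure T)] {J : ℕ}
    (hJ : ∀ t ∈ T, perfectNorm T t ≤ J) (f : H →* G) {x : G} (hx : x ∈ closure (f '' T)) :
    perfectNorm (f '' T) x ≤ J * wordNorm (f '' T) x := by
  have : Group.IsPerfect (closure (f '' T)) := by
    rw [← MonoidHom.map_closure]
    exact Group.IsPerfect.map f
  refine perfectNorm_le_mul_wordNorm ?_ hx
  rintro _ ⟨t, ht, rfl⟩
  exact (perfectNorm_image_le f (mem_commutator_closure ht)).trans (hJ t ht)

end PerfectNorm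

/-- If `H` is a perfect group generated by a finite set `T` of cardinality `d`,
then there is a constant `J ≥ 1` such that for every quotient `π : H ↠ H'`,
the group `H'` is perfect, is generated by `T' = π(T)`, and
`‖g‖_{T'} ≤ ‖g‖_perfect ≤ J ‖g‖_{T'}` for every `g ∈ H'`; i.e. the identity
`(H', d_perfect) → (H', d_{T'})` is `(J⁻¹, 1)`-bi-Lipschitz, with `J`
independent of the quotient. -/
theorem perfect_norm_comparable_in_quotients
    (H : Type) [Group H] (d : ℕ) (T : Finset H)
    (hcard : T.card = d)
    (hgen : Subgroup.closure (T : Set H) = ⊤)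
    (hperf : commutator H = ⊤) :
    ∃ J : ℕ, 1 ≤ J ∧
      ∀ (H' : Type) (_ : Group H') (π : H →* H'), Function.Surjective π →
        commutator H' = ⊤ ∧
        Subgroup.closure (π '' (T : Set H)) = ⊤ ∧
        ∀ g : H',
          wordNorm (π '' (T : Set H)) g ≤ perfectNorm (π '' (T : Set H)) g ∧
          perfectNorm (π '' (T : Set H)) g ≤ J * wordNorm (π '' (T : Set H)) g := by
  have : Group.IsPerfect H := ⟨hperf⟩
  have : Group.IsPerfect (Subgroup.closure (T : Set H)) := by rw [hgen]; infer_instance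
  refine ⟨max 1 (T.sup (perfectNorm (T : Set H))), le_max_left _ _, fun H' _ π hπ => ?_⟩
  have hperf' : commutator H' = ⊤ := (Group.IsPerfect.ofSurjective hπ).commutator_eq_top
  have hgen' : Subgroup.closure (π '' (T : Set H)) = ⊤ := by
    rw [← MonoidHom.map_closure, hgen, Subgroup.map_top_of_surjective π hπ]
  refine ⟨hperf', hgen', fun g => ⟨wordNorm_le_perfectNorm ?_, ?_⟩⟩
  · rw [hgen', ← commutator_def, hperf']
    exact Subgroup.mem_top g
  · exact perfectNorm_image_le_mul_wordNorm
      (fun t ht => (Finset.le_sup ht).trans (le_max_right _ _)) π (hgen' ▸ Subgroup.mem_top g)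
end
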